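/- arXiv:2307.02517 — 4 statements merged into one kernel-verified Lean document; each statement's English description precedes it below -/
import Mathlib

section
/- There exists an absolute constant C > 0 such that for every finite connected graph G with at least two vertices the following holds: writing η = η(G), δ = diam(G), and capt for the capture time of the one-cop Robber Locating Game on G^{1/η}, one has ζ(G) ≤ C · 2^{capt/η} · 16^η · δ^{2η}. -/
open SimpleGraph

/-- The vertex type of the `m`-subdivision of a simple graph `G`:
branch vertices (`Sum.inl`) together with, for each edge (oriented from its
smaller to its larger endpoint) and each `i : Fin (m-1)`, the internal vertex
of the corresponding thread at distance `i+1` from the smaller endpoint. -/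
abbrev SubVert (V : Type*) [LinearOrder V] (G : SimpleGraph V) (m : ℕ) : Type _ :=
  V ⊕ ({e : V × V // G.Adj e.1 e.2 ∧ e.1 < e.2} × Fin (m - 1))

/-- Basic adjacency generating relation for the `m`-subdivision. -/
def subPre {V : Type*} [LinearOrder V] (G : SimpleGraph V) (m : ℕ) :
    SubVert V G m → SubVert V G m → Prop
  | Sum.inl u, Sum.inl v => m = 1 ∧ G.Adj u v
  | Sum.inl u, Sum.inr ei => (u = ei.1.1.1 ∧ (ei.2 : ℕ) = 0) ∨ (u = ei.1.1.2 ∧ (ei.2 : ℕ) + 2 = m)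
  | Sum.inr ei, Sum.inr ej => ei.1 = ej.1 ∧ (ei.2 : ℕ) + 1 = (ej.2 : ℕ)
  | Sum.inr _, Sum.inl _ => False

/-- The `m`-subdivision `G^{1/m}` of `G`: every edge of `G` is replaced by a
path (thread) of length `m`. -/
def Subdiv {V : Type*} [LinearOrder V] (G : SimpleGraph V) (m : ℕ) :
    SimpleGraph (SubVert V G m) :=
  SimpleGraph.fromRel (subPre G m)

/-- The vertex of `G^{1/m}` lying on the thread replacing the edge `{w₁, w₂}`
at distance `x` along the thread from `w₁` (for `0 ≤ x ≤ m`). -/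
def threadVert {V : Type*} [LinearOrder V] (G : SimpleGraph V) (m : ℕ) (w₁ w₂ : V)
    (h : G.Adj w₁ w₂) (x : ℕ) : SubVert V G m :=
  if hx0 : x = 0 then Sum.inl w₁
  else if hxm : m ≤ x then Sum.inl w₂
  else if hlt : w₁ < w₂ then
    Sum.inr (⟨(w₁, w₂), h, hlt⟩, ⟨x - 1, by omega⟩)
  else
    Sum.inr (⟨(w₂, w₁), h.symm, lt_of_le_of_ne (not_lt.mp hlt) h.ne'⟩, ⟨m - x - 1, by omega⟩)

/-- A vertex of `G^{1/m}` lies on the thread replacing the edge `{w₁, w₂}`. -/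
def OnThread {V : Type*} [LinearOrder V] (G : SimpleGraph V) (m : ℕ) (w₁ w₂ : V)
    (h : G.Adj w₁ w₂) (v : SubVert V G m) : Prop :=
  ∃ x ≤ m, v = threadVert G m w₁ w₂ h x
/-- A robber trajectory: at each time step the robber stays put or moves
to an adjacent vertex. -/
def ValidTraj {V : Type*} (G : SimpleGraph V) (r : ℕ → V) : Prop :=
  ∀ t, r (t + 1) = r t ∨ G.Adj (r t) (r (t + 1))

/-- A deterministic cop strategy for `k` cops: a function from the list of
probe results of all previous rounds (each round's results being the `k`
probed distances) to the `k` vertices probed in the current round. -/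
abbrev CopStrategy (V : Type*) (k : ℕ) := List (Fin k → ℕ) → (Fin k → V)

/-- The history of probe results after `t` rounds, when strategy `A` plays
against the robber trajectory `r`. -/
noncomputable def probeHist {V : Type*} (G : SimpleGraph V) {k : ℕ} (A : CopStrategy V k)
    (r : ℕ → V) : ℕ → List (Fin k → ℕ)
  | 0 => []
  | t + 1 => probeHist G A r t ++ [fun i => G.dist (A (probeHist G A r t) i) (r t)]

/-- The set of robber positions consistent with all probe results received
through round `t` (inclusive), when `A` plays against trajectory `r`. -/
def RSet {V : Type*} (G : SimpleGraph V) {k : ℕ} (A : CopStrategy V k)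
    (r : ℕ → V) (t : ℕ) : Set V :=
  {w | ∃ r', ValidTraj G r' ∧ probeHist G A r' (t + 1) = probeHist G A r (t + 1) ∧ r' t = w}

/-- A cop strategy is winning if against every robber trajectory, after
finitely many rounds the consistent set becomes a singleton. -/
def CopWinning {V : Type*} (G : SimpleGraph V) {k : ℕ} (A : CopStrategy V k) : Prop :=
  ∀ r : ℕ → V, ValidTraj G r → ∃ t, RSet G A r t = {r t}

/-- `G` is localizable with `k` cops. -/
def Localizable {V : Type*} (G : SimpleGraph V) (k : ℕ) : Prop :=
  ∃ A : CopStrategy V k, CopWinning G A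

/-- The localization number `ζ(G)`. -/
noncomputable def locNum {V : Type*} (G : SimpleGraph V) : ℕ :=
  sInf {k | Localizable G k}

/-- The subdivision number `η(G)`: the least `m ≥ 1` such that `G^{1/m}` is
localizable with one cop. -/
noncomputable def subdivNum {V : Type*} [LinearOrder V] (G : SimpleGraph V) : ℕ :=
  sInf {m | 1 ≤ m ∧ Localizable (Subdiv G m) 1}

/-- The capture time: the least `T` such that some strategy with `k` cops is
guaranteed to locate the robber within `T` rounds. -/
noncomputable def captTime {V : Type*} (G : SimpleGraph V) (k : ℕ) : ℕ :=
  sInf {T | ∃ A : CopStrategy V k, ∀ r : ℕ → V, ValidTraj G r → ∃ t < T, RSet G A r t = {r t}}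

/-- The node set of the cop strategy graph `H_A` of a strategy `A`: all game
states (identified with the information available to the cops, i.e. the
history of probe results) reachable under `A` along some robber trajectory
without passing beyond a terminating state. -/
def StrategyStates {V : Type*} (G : SimpleGraph V) {k : ℕ} (A : CopStrategy V k) :
    Set (List (Fin k → ℕ)) :=
  {h | ∃ r t, ValidTraj G r ∧ h = probeHist G A r t ∧
    ∀ s, s + 1 < t → RSet G A r s ≠ {r s}}
/-! ### Distances in subdivisions -/

section Dist

set_option linter.unusedSectionVars false

variable {V : Type*} [LinearOrder V] {G : SimpleGraph V} {m : ℕ}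

/-- First end of the thread of a vertex. -/
def eA : SubVert V G m → V
  | Sum.inl a => a
  | Sum.inr ei => ei.1.1.1

/-- Second end of the thread of a vertex. -/
def eB : SubVert V G m → V
  | Sum.inl a => a
  | Sum.inr ei => ei.1.1.2

/-- Position along the thread. -/
def eY : SubVert V G m → ℕ
  | Sum.inl _ => 0
  | Sum.inr ei => (ei.2 : ℕ) + 1

/-- Distance from `p` to a branch vertex. -/
noncomputable def dP (p : SubVert V G m) (u : V) : ℕ :=
  min (m * G.dist (eA p) u + eY p) (m * G.dist (eB p) u + (m - eY p))

open Classical in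
/-- Explicit distance function. -/
noncomputable def pot (p : SubVert V G m) : SubVert V G m → ℕ
  | Sum.inl u => dP p u
  | Sum.inr ei => if ∃ j, p = Sum.inr (ei.1, j) then
      (eY p - ((ei.2 : ℕ) + 1)) + (((ei.2 : ℕ) + 1) - eY p)
    else min (dP p ei.1.1.1 + ((ei.2 : ℕ) + 1)) (dP p ei.1.1.2 + (m - ((ei.2 : ℕ) + 1)))

lemma dist_step (hG : G.Connected) {u v : V} (h : G.Adj u v) (a : V) :
    G.dist a u ≤ G.dist a v + 1 := by
  have h1 := hG.dist_triangle (u := a) (v := v) (w := u)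
  have h2 : G.dist v u = 1 := SimpleGraph.dist_eq_one_iff_adj.2 h.symm
  omega

lemma mul_dist_step (m : ℕ) (hG : G.Connected) {u v : V} (h : G.Adj u v) (a : V) :
    m * G.dist a u ≤ m * G.dist a v + m := by
  have := Nat.mul_le_mul_left m (dist_step hG h a)
  rw [Nat.mul_add, Nat.mul_one] at this
  exact this

lemma dP_step (hG : G.Connected) {u v : V} (h : G.Adj u v) (p : SubVert V G m) :
    dP p u ≤ dP p v + m := by
  unfold dP
  have h1 := mul_dist_step m hG h (eA p)
  have h2 := mul_dist_step m hG h (eB p)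
  omega

lemma pot_self (p : SubVert V G m) : pot p p = 0 := by
  rcases p with a | ⟨e, i⟩
  · simp [pot, dP, eA, eB, eY]
  · simp [pot, eY]

lemma pot_lip (hG : G.Connected) (hm : 1 ≤ m) (p q q' : SubVert V G m) (h : subPre G m q q') :
    pot p q ≤ pot p q' + 1 ∧ pot p q' ≤ pot p q + 1 := by
  rcases q with u | ⟨e, i⟩ <;> rcases q' with v | ⟨e', i'⟩
  · obtain ⟨h1, h2⟩ := h
    subst h1
    exact ⟨dP_step hG h2 p, dP_step hG h2.symm p⟩
  · have hadj := e'.2.1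
    have hd1 : G.dist e'.1.1 e'.1.2 = 1 := SimpleGraph.dist_eq_one_iff_adj.2 hadj
    have hd2 : G.dist e'.1.2 e'.1.1 = 1 := SimpleGraph.dist_eq_one_iff_adj.2 hadj.symm
    have s1 := dP_step hG hadj p
    have s2 := dP_step hG hadj.symm p
    have hi := i'.2
    simp only [pot]
    rcases h with ⟨h1, h2⟩ | ⟨h1, h2⟩
    · simp only at h1 h2
      subst h1
      split_ifs with hp
      · obtain ⟨j, rfl⟩ := hp
        have hj := j.2
        simp only [dP, eA, eB, eY, hd2, SimpleGraph.dist_self]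
        omega
      · omega
    · simp only at h1 h2
      subst h1
      split_ifs with hp
      · obtain ⟨j, rfl⟩ := hp
        have hj := j.2
        simp only [dP, eA, eB, eY, hd1, SimpleGraph.dist_self]
        omega
      · omega
  · exact h.elim
  · obtain ⟨h1, h2⟩ := h
    simp only at h1 h2
    subst h1
    have hi := i'.2
    have hi := i.2
    simp only [pot]
    split_ifs with hp
    · omega
    · omega

lemma sub_adj_iff {q q' : SubVert V G m} :
    (Subdiv G m).Adj q q' ↔ q ≠ q' ∧ (subPre G m q q' ∨ subPre G m q' q) := by
  rw [Subdiv, SimpleGraph.fromRel_adj]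

lemma pot_adj (hG : G.Connected) (hm : 1 ≤ m) (p : SubVert V G m) {q q' : SubVert V G m}
    (h : (Subdiv G m).Adj q q') : pot p q' ≤ pot p q + 1 := by
  rcases (sub_adj_iff.1 h).2 with h | h
  · exact (pot_lip hG hm p _ _ h).2
  · exact (pot_lip hG hm p _ _ h).1

lemma pot_walk (hG : G.Connected) (hm : 1 ≤ m) (p : SubVert V G m) {q q' : SubVert V G m}
    (w : (Subdiv G m).Walk q q') : pot p q' ≤ pot p q + w.length := by
  induction w with
  | nil => simp
  | cons h w ih =>
    have := pot_adj hG hm p h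
    rw [SimpleGraph.Walk.length_cons]
    omega

/-- There is a walk of length at most `k`. -/
def WL {X : Type*} (H : SimpleGraph X) (q q' : X) (k : ℕ) : Prop :=
  ∃ w : H.Walk q q', w.length ≤ k

lemma WL.refl {X : Type*} {H : SimpleGraph X} (q : X) (k : ℕ) : WL H q q k :=
  ⟨SimpleGraph.Walk.nil, by simp⟩

lemma WL.trans {X : Type*} {H : SimpleGraph X} {a b c : X} {k l : ℕ} (h : WL H a b k)
    (h' : WL H b c l) : WL H a c (k + l) := by
  obtain ⟨w, hw⟩ := h
  obtain ⟨w', hw'⟩ := h'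
  exact ⟨w.append w', by rw [SimpleGraph.Walk.length_append]; omega⟩

lemma WL.symm {X : Type*} {H : SimpleGraph X} {a b : X} {k : ℕ} (h : WL H a b k) :
    WL H b a k := by
  obtain ⟨w, hw⟩ := h
  exact ⟨w.reverse, by rw [SimpleGraph.Walk.length_reverse]; omega⟩

lemma WL.mono {X : Type*} {H : SimpleGraph X} {a b : X} {k l : ℕ} (h : WL H a b k) (hk : k ≤ l) :
    WL H a b l := by
  obtain ⟨w, hw⟩ := h
  exact ⟨w, by omega⟩

lemma WL.of_adj {X : Type*} {H : SimpleGraph X} {a b : X} (h : H.Adj a b) : WL H a b 1 :=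
  ⟨h.toWalk, by simp⟩

lemma WL.of_pre {q q' : SubVert V G m} (h : subPre G m q q') : WL (Subdiv G m) q q' 1 := by
  by_cases hq : q = q'
  · subst hq
    exact WL.refl _ _
  · exact WL.of_adj (sub_adj_iff.2 ⟨hq, Or.inl h⟩)

lemma wl_start (e : {e : V × V // G.Adj e.1 e.2 ∧ e.1 < e.2}) (i : ℕ) (hi : i < m - 1) :
    WL (Subdiv G m) (Sum.inl e.1.1) (Sum.inr (e, ⟨i, hi⟩)) (i + 1) := by
  induction i with
  | zero => exact WL.of_pre (Or.inl ⟨rfl, rfl⟩)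
  | succ i ih =>
    exact (ih (by omega)).trans (WL.of_pre ⟨rfl, rfl⟩)

lemma wl_inner (e : {e : V × V // G.Adj e.1 e.2 ∧ e.1 < e.2}) (i d : ℕ) (hi : i + d < m - 1) :
    WL (Subdiv G m) (Sum.inr (e, ⟨i, by omega⟩)) (Sum.inr (e, ⟨i + d, hi⟩)) d := by
  induction d with
  | zero => exact WL.refl _ _
  | succ d ih =>
    exact (ih (by omega)).trans (WL.of_pre ⟨rfl, rfl⟩)

lemma wl_end (e : {e : V × V // G.Adj e.1 e.2 ∧ e.1 < e.2}) (i : ℕ) (hi : i < m - 1) :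
    WL (Subdiv G m) (Sum.inl e.1.2) (Sum.inr (e, ⟨i, hi⟩)) (m - (i + 1)) := by
  have h1 := wl_inner (m := m) e i (m - 2 - i) (by omega)
  have h2 : WL (Subdiv G m) (Sum.inl e.1.2)
      (Sum.inr (e, ⟨i + (m - 2 - i), by omega⟩)) 1 :=
    WL.of_pre (Or.inr ⟨rfl, by simp only; omega⟩)
  exact (h2.trans h1.symm).mono (by omega)

lemma wl_edge (hm : 1 ≤ m) {u v : V} (h : G.Adj u v) :
    WL (Subdiv G m) (Sum.inl u) (Sum.inl v) m := by
  rcases Nat.lt_or_ge 1 m with h1 | h1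
  · rcases lt_or_gt_of_ne h.ne with hl | hl
    · have a := wl_start (m := m) ⟨(u, v), h, hl⟩ 0 (by omega)
      have b := wl_end (m := m) ⟨(u, v), h, hl⟩ 0 (by omega)
      exact (a.trans b.symm).mono (by omega)
    · have a := wl_start (m := m) ⟨(v, u), h.symm, hl⟩ 0 (by omega)
      have b := wl_end (m := m) ⟨(v, u), h.symm, hl⟩ 0 (by omega)
      exact (b.trans a.symm).mono (by omega)
  · have : m = 1 := by omega
    subst this
    exact WL.of_pre ⟨rfl, h⟩

lemma wl_branch (hG : G.Connected) (hm : 1 ≤ m) (u v : V) :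
    WL (Subdiv G m) (Sum.inl u) (Sum.inl v) (m * G.dist u v) := by
  obtain ⟨w, hw⟩ := hG.exists_walk_length_eq_dist u v
  rw [← hw]
  clear hw
  induction w with
  | nil => exact WL.refl _ _
  | cons h w ih =>
    exact ((wl_edge hm h).trans ih).mono (by rw [SimpleGraph.Walk.length_cons]; ring_nf; omega)

lemma wl_ends (p : SubVert V G m) :
    WL (Subdiv G m) (Sum.inl (eA p)) p (eY p) ∧ WL (Subdiv G m) (Sum.inl (eB p)) p (m - eY p) := by
  rcases p with a | ⟨e, i⟩
  · exact ⟨WL.refl _ _, WL.refl _ _⟩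
  · exact ⟨wl_start e i.1 i.2, wl_end e i.1 i.2⟩

lemma wl_dP (hG : G.Connected) (hm : 1 ≤ m) (p : SubVert V G m) (u : V) :
    WL (Subdiv G m) p (Sum.inl u) (dP p u) := by
  have h1 := (wl_ends p).1.symm.trans (wl_branch hG hm (eA p) u)
  have h2 := (wl_ends p).2.symm.trans (wl_branch hG hm (eB p) u)
  unfold dP
  rcases min_choice (m * G.dist (eA p) u + eY p) (m * G.dist (eB p) u + (m - eY p)) with h | h <;>
    rw [h]
  · exact h1.mono (by omega)
  · exact h2.mono (by omega)

lemma wl_pot (hG : G.Connected) (hm : 1 ≤ m) (p q : SubVert V G m) :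
    WL (Subdiv G m) p q (pot p q) := by
  rcases q with u | ⟨e, i⟩
  · exact wl_dP hG hm p u
  · simp only [pot]
    split_ifs with hp
    · obtain ⟨⟨j, hj⟩, rfl⟩ := hp
      obtain ⟨i, hi⟩ := i
      simp only [eY]
      rcases Nat.le_total i j with h | h
      · obtain ⟨d, rfl⟩ := Nat.exists_eq_add_of_le h
        exact (wl_inner e i d hj).symm.mono (by omega)
      · obtain ⟨d, rfl⟩ := Nat.exists_eq_add_of_le h
        exact (wl_inner e j d hi).mono (by omega)
    · have h1 := (wl_dP hG hm p e.1.1).trans (wl_start e i.1 i.2)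
      have h2 := (wl_dP hG hm p e.1.2).trans (wl_end e i.1 i.2)
      rcases min_choice (dP p e.1.1 + ((i : ℕ) + 1)) (dP p e.1.2 + (m - ((i : ℕ) + 1))) with h | h <;>
        rw [h]
      · exact h1
      · exact h2

lemma sub_connected (hG : G.Connected) (hm : 1 ≤ m) : (Subdiv G m).Connected := by
  have : Nonempty (SubVert V G m) := ⟨Sum.inl hG.nonempty.some⟩
  refine ⟨fun p q => ?_⟩
  obtain ⟨w, -⟩ := wl_pot hG hm p q
  exact ⟨w⟩

lemma sub_dist (hG : G.Connected) (hm : 1 ≤ m) (p q : SubVert V G m) :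
    (Subdiv G m).dist p q = pot p q := by
  apply le_antisymm
  · obtain ⟨w, hw⟩ := wl_pot hG hm p q
    exact (SimpleGraph.dist_le w).trans hw
  · obtain ⟨w, hw⟩ := (sub_connected hG hm).exists_walk_length_eq_dist p q
    have := pot_walk hG hm p w
    rw [pot_self] at this
    omega

lemma sub_dist_inl (hG : G.Connected) (hm : 1 ≤ m) (p : SubVert V G m) (u : V) :
    (Subdiv G m).dist p (Sum.inl u) = dP p u := sub_dist hG hm p _

lemma dP_inl (z u : V) : dP (Sum.inl z : SubVert V G m) u = m * G.dist z u := by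
  simp only [dP, eA, eB, eY]
  omega

lemma sub_dist_inl_inr (hG : G.Connected) (hm : 1 ≤ m) (z : V)
    (e : {e : V × V // G.Adj e.1 e.2 ∧ e.1 < e.2}) (i : Fin (m - 1)) :
    (Subdiv G m).dist (Sum.inl z) (Sum.inr (e, i)) =
      min (m * G.dist z e.1.1 + ((i : ℕ) + 1)) (m * G.dist z e.1.2 + (m - ((i : ℕ) + 1))) := by
  rw [sub_dist hG hm]
  simp [pot, dP_inl]

lemma sub_dist_thread (hG : G.Connected) (hm : 1 ≤ m) (p : SubVert V G m) {u v : V}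
    (h : G.Adj u v) (hA : u ≠ eA p) (hB : u ≠ eB p) (x : ℕ) (hx : x ≤ m) :
    (Subdiv G m).dist p (threadVert G m u v h x) = min (dP p u + x) (dP p v + (m - x)) := by
  rw [sub_dist hG hm]
  have s1 := dP_step hG h p
  have s2 := dP_step hG h.symm p
  unfold threadVert
  split_ifs with h0 h1 h2
  · simp only [pot]; omega
  · simp only [pot]; omega
  · simp only [pot]
    rw [if_neg]
    · rw [show x - 1 + 1 = x by omega]
    · rintro ⟨j, rfl⟩
      exact hA rfl
  · simp only [pot]
    rw [if_neg]
    · rw [show m - x - 1 + 1 = m - x by omega, show m - (m - x) = x by omega, min_comm]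
    · rintro ⟨j, rfl⟩
      exact hB rfl

lemma thread_step {u v : V} (h : G.Adj u v) (x : ℕ) (hx : x < m) :
    threadVert G m u v h (x + 1) = threadVert G m u v h x ∨
      (Subdiv G m).Adj (threadVert G m u v h x) (threadVert G m u v h (x + 1)) := by
  have key : subPre G m (threadVert G m u v h x) (threadVert G m u v h (x + 1)) ∨
      subPre G m (threadVert G m u v h (x + 1)) (threadVert G m u v h x) := by
    unfold threadVert
    split_ifs with h1 h2 h3 h4 h5 h6 h7 <;> first | omega | skip
    all_goals simp only [subPre, true_and, false_or, or_false]
    all_goals first | omega | exact Or.inl ⟨by omega, h⟩ | skip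
    all_goals (exfalso; assumption)
  by_cases he : threadVert G m u v h (x + 1) = threadVert G m u v h x
  · exact Or.inl he
  · exact Or.inr (sub_adj_iff.2 ⟨fun h => he h.symm, key⟩)

end Dist
/-! ### Generalities on histories -/

section Hist

variable {X : Type*} {H : SimpleGraph X} {k : ℕ} {A : CopStrategy X k}

lemma hist_length (r : ℕ → X) (t : ℕ) : (probeHist H A r t).length = t := by
  induction t with
  | zero => rfl
  | succ t ih => simp [probeHist, ih]

lemma hist_succ_inj {r r' : ℕ → X} {t : ℕ}
    (h : probeHist H A r' (t + 1) = probeHist H A r (t + 1)) :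
    probeHist H A r' t = probeHist H A r t ∧
      ∀ i, H.dist (A (probeHist H A r t) i) (r' t) = H.dist (A (probeHist H A r t) i) (r t) := by
  simp only [probeHist] at h
  obtain ⟨h1, h2⟩ := List.append_inj' h rfl
  refine ⟨h1, fun i => ?_⟩
  rw [h1] at h2
  simp only [List.cons.injEq, and_true] at h2
  exact congrFun h2 i

lemma hist_le_inj {r r' : ℕ → X} {t : ℕ}
    (h : probeHist H A r' t = probeHist H A r t) (s : ℕ) (hs : s ≤ t) :
    probeHist H A r' s = probeHist H A r s := by
  induction t with
  | zero =>
    have : s = 0 := by omega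
    subst this
    exact h
  | succ t ih =>
    rcases Nat.lt_or_ge s (t + 1) with h1 | h1
    · exact ih (hist_succ_inj h).1 (by omega)
    · have : s = t + 1 := by omega
      subst this
      exact h

lemma hist_congr {r r' : ℕ → X} {t : ℕ} (h : ∀ s < t, r' s = r s) :
    probeHist H A r' t = probeHist H A r t := by
  induction t with
  | zero => rfl
  | succ t ih =>
    simp only [probeHist]
    rw [ih (fun s hs => h s (by omega)), h t (by omega)]

lemma rset_of {r : ℕ → X} {t : ℕ} (hr : ValidTraj H r)
    (h : ∀ r', ValidTraj H r' → probeHist H A r' (t + 1) = probeHist H A r (t + 1) → r' t = r t) :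
    RSet H A r t = {r t} := by
  ext w
  simp only [RSet, Set.mem_ofPred_eq, Set.mem_singleton_iff]
  constructor
  · rintro ⟨r', h1, h2, rfl⟩
    exact h r' h1 h2
  · rintro rfl
    exact ⟨r, hr, rfl, rfl⟩

lemma traj_dist (hH : H.Connected) {r : ℕ → X} (hr : ValidTraj H r) (z : X) (s d : ℕ) :
    H.dist z (r (s + d)) ≤ H.dist z (r s) + d ∧ H.dist z (r s) ≤ H.dist z (r (s + d)) + d := by
  induction d with
  | zero => simp
  | succ d ih =>
    rw [← Nat.add_assoc]
    have h1 := hH.dist_triangle (u := z) (v := r (s + d)) (w := r (s + d + 1))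
    have h2 := hH.dist_triangle (u := z) (v := r (s + d + 1)) (w := r (s + d))
    have h3 : H.dist (r (s + d)) (r (s + d + 1)) ≤ 1 := by
      rcases hr (s + d) with h | h
      · rw [h]; simp
      · exact (SimpleGraph.dist_eq_one_iff_adj.2 h).le
    have h4 := SimpleGraph.dist_comm (G := H) (u := r (s + d)) (v := r (s + d + 1))
    omega

lemma traj_dist' (hH : H.Connected) {r : ℕ → X} (hr : ValidTraj H r) (z : X) (s t N : ℕ)
    (h1 : s ≤ t + N) (h2 : t ≤ s + N) :
    H.dist z (r t) ≤ H.dist z (r s) + N := by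
  rcases Nat.le_total s t with h | h
  · obtain ⟨d, rfl⟩ := Nat.exists_eq_add_of_le h
    have := (traj_dist hH hr z s d).1
    omega
  · obtain ⟨d, rfl⟩ := Nat.exists_eq_add_of_le h
    have := (traj_dist hH hr z t d).2
    omega

/-- On a finite graph, a winning strategy wins in bounded time. -/
lemma exists_bound [Finite X] (hA : CopWinning H A) :
    ∃ T, ∀ r : ℕ → X, ValidTraj H r → ∃ t < T, RSet H A r t = {r t} := by
  by_contra! hcon
  let tX : TopologicalSpace X := ⊥
  have : DiscreteTopology X := ⟨rfl⟩
  let C : ℕ → Set (ℕ → X) := fun T => {r | ValidTraj H r ∧ ∀ t < T, RSet H A r t ≠ {r t}}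
  have hcl : ∀ T, IsClosed (C T) := by
    intro T
    -- the complement is open
    rw [← isOpen_compl_iff, isOpen_iff_mem_nhds]
    intro r hr
    have hop : ∀ N : ℕ, {r' : ℕ → X | ∀ s < N, r' s = r s} ∈ nhds r := by
      intro N
      have : {r' : ℕ → X | ∀ s < N, r' s = r s} = (Set.pi (↑(Finset.range N)) fun s => {r s}) := by
        ext r'
        simp [Set.mem_pi]
      rw [this]
      exact set_pi_mem_nhds (Finset.finite_toSet _) (fun s _ => by simp)
    have hr' : ValidTraj H r → ∃ t < T, RSet H A r t = {r t} := by
      intro hv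
      by_contra! h
      exact hr ⟨hv, h⟩
    by_cases hv : ValidTraj H r
    · obtain ⟨t, ht, hR⟩ := hr' hv
      filter_upwards [hop (t + 1)] with r' h' hC
      apply hC.2 t ht
      have : RSet H A r' t = RSet H A r t := by
        unfold RSet
        rw [hist_congr h']
      rw [this, hR, h' t (by omega)]
    · unfold ValidTraj at hv
      push Not at hv
      obtain ⟨t, h1, h2⟩ := hv
      filter_upwards [hop (t + 2)] with r' h' hC
      have := hC.1 t
      rw [h' t (by omega), h' (t + 1) (by omega)] at this
      tauto
  have hne := IsCompact.nonempty_iInter_of_sequence_nonempty_isCompact_isClosed C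
    (fun T r hr => ⟨hr.1, fun t ht => hr.2 t (by omega)⟩)
    (fun T => by
      obtain ⟨r, h1, h2⟩ := hcon T
      exact ⟨r, h1, h2⟩)
    (hcl 0).isCompact hcl
  obtain ⟨r, hr⟩ := hne
  rw [Set.mem_iInter] at hr
  obtain ⟨t, ht⟩ := hA r (hr 0).1
  exact (hr (t + 1)).2 t (by omega) ht

end Hist

/-! ### Every connected graph has a localizable subdivision -/

section Exist

variable {V : Type*} [LinearOrder V] {G : SimpleGraph V} {m : ℕ}

lemma const_edge {r : ℕ → SubVert V G m} (hr : ValidTraj (Subdiv G m) r) (a d : ℕ)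
    (h : ∀ s, a ≤ s → s ≤ a + d → ∀ z, r s ≠ Sum.inl z) :
    ∃ e, ∀ s, a ≤ s → s ≤ a + d → ∃ i, r s = Sum.inr (e, i) := by
  induction d with
  | zero =>
    rcases hra : r a with z | ⟨e, i⟩
    · exact absurd hra (h a le_rfl (by omega) z)
    · refine ⟨e, fun s h1 h2 => ⟨i, ?_⟩⟩
      have : s = a := by omega
      rw [this, hra]
  | succ d ih =>
    obtain ⟨e, he⟩ := ih (fun s h1 h2 => h s h1 (by omega))
    refine ⟨e, fun s h1 h2 => ?_⟩
    rcases Nat.lt_or_ge s (a + d + 1) with h3 | h3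
    · exact he s h1 (by omega)
    · have hs : s = a + d + 1 := by omega
      subst hs
      obtain ⟨i, hi⟩ := he (a + d) (by omega) (by omega)
      rcases hr (a + d) with h4 | h4
      · exact ⟨i, by rw [h4, hi]⟩
      · rcases hz : r (a + d + 1) with z | ⟨e', i'⟩
        · exact absurd hz (h _ h1 (by omega) z)
        · rw [hi, hz, sub_adj_iff] at h4
          rcases h4.2 with h5 | h5
          · have := h5.1
            simp only at this
            subst this
            exact ⟨i', rfl⟩
          · have := h5.1
            simp only at this
            subst this
            exact ⟨i', rfl⟩

lemma star_mem (hG : G.Connected) (hm : 1 ≤ m) (z : V)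
    (e : {e : V × V // G.Adj e.1 e.2 ∧ e.1 < e.2}) (i : Fin (m - 1))
    (h : (Subdiv G m).dist (Sum.inl z) (Sum.inr (e, i)) < m) : z = e.1.1 ∨ z = e.1.2 := by
  rw [sub_dist_inl_inr hG hm] at h
  by_contra! hc
  have h1 := hG.pos_dist_of_ne hc.1
  have h2 := hG.pos_dist_of_ne hc.2
  have h3 := Nat.le_mul_of_pos_right m h1
  have h4 := Nat.le_mul_of_pos_right m h2
  omega

lemma dist_e1 (hG : G.Connected) (hm : 1 ≤ m)
    (e : {e : V × V // G.Adj e.1 e.2 ∧ e.1 < e.2}) (i : Fin (m - 1)) :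
    (Subdiv G m).dist (Sum.inl e.1.1) (Sum.inr (e, i)) = i + 1 := by
  rw [sub_dist_inl_inr hG hm, SimpleGraph.dist_self, SimpleGraph.dist_eq_one_iff_adj.2 e.2.1]
  have := i.2
  omega

lemma dist_e2 (hG : G.Connected) (hm : 1 ≤ m)
    (e : {e : V × V // G.Adj e.1 e.2 ∧ e.1 < e.2}) (i : Fin (m - 1)) :
    (Subdiv G m).dist (Sum.inl e.1.2) (Sum.inr (e, i)) = m - (i + 1) := by
  rw [sub_dist_inl_inr hG hm, SimpleGraph.dist_self, SimpleGraph.dist_eq_one_iff_adj.2 e.2.1.symm]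
  have := i.2
  omega

/-- A vertex near `w` whose distance to `v` is that of `w` is `w`. -/
lemma near_eq (hG : G.Connected) (hm : 1 ≤ m) (v w : V) (q : SubVert V G m)
    (hn : 2 * (Subdiv G m).dist (Sum.inl w) q < m)
    (h : (Subdiv G m).dist (Sum.inl v) q = m * G.dist v w) : q = Sum.inl w := by
  rcases q with u | ⟨e, i⟩
  · rw [sub_dist_inl hG hm, dP_inl] at hn
    by_contra hc
    have hne : w ≠ u := fun h => hc (by rw [h])
    have := Nat.le_mul_of_pos_right m (hG.pos_dist_of_ne hne)
    omega
  · exfalso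
    have s1 := mul_dist_step m hG e.2.1 v
    have s2 := mul_dist_step m hG e.2.1.symm v
    have hi := i.2
    have key : m * G.dist v e.1.1 = m * G.dist v e.1.2 ∨
        m * G.dist v e.1.1 = m * G.dist v e.1.2 + m ∨
        m * G.dist v e.1.2 = m * G.dist v e.1.1 + m := by
      have t1 := dist_step hG e.2.1 v
      have t2 := dist_step hG e.2.1.symm v
      have : G.dist v e.1.1 = G.dist v e.1.2 ∨
        G.dist v e.1.1 = G.dist v e.1.2 + 1 ∨
        G.dist v e.1.2 = G.dist v e.1.1 + 1 := by omega
      rcases this with h | h | h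
      · left; rw [h]
      · right; left; rw [h]; ring
      · right; right; rw [h]; ring
    rcases star_mem hG hm w e i (by omega) with hw | hw
    · subst hw
      rw [dist_e1 hG hm] at hn
      rw [sub_dist_inl_inr hG hm] at h
      omega
    · subst hw
      rw [dist_e2 hG hm] at hn
      rw [sub_dist_inl_inr hG hm] at h
      omega

end Exist

lemma exists_localizable (n : ℕ) (hn : 2 ≤ n) (G : SimpleGraph (Fin n)) (hG : G.Connected) :
    Localizable (Subdiv G (100 * n)) 1 := by
  have hm : 1 ≤ 100 * n := by omega
  obtain ⟨m, hmdef⟩ : ∃ m, m = 100 * n := ⟨_, rfl⟩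
  rw [← hmdef] at hm ⊢
  have hH := sub_connected hG hm
  let A : CopStrategy (SubVert (Fin n) G m) 1 :=
    fun L _ => Sum.inl ⟨L.length % n, Nat.mod_lt _ (by omega)⟩
  refine ⟨A, fun r hr => ?_⟩
  -- probes at time `z` and `n + z`
  have probe1 : ∀ r' t, probeHist (Subdiv G m) A r' (t + 1) = probeHist (Subdiv G m) A r (t + 1) →
      ∀ z : Fin n, (z : ℕ) ≤ t → (Subdiv G m).dist (Sum.inl z) (r' z) = (Subdiv G m).dist (Sum.inl z) (r z) := by
    intro r' t h z hz
    have h1 := (hist_succ_inj (hist_le_inj h (z + 1) (by omega))).2 0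
    simp only [A, hist_length, Nat.mod_eq_of_lt z.2] at h1
    exact h1
  have probe2 : ∀ r' t, probeHist (Subdiv G m) A r' (t + 1) = probeHist (Subdiv G m) A r (t + 1) →
      ∀ z : Fin n, n + (z : ℕ) ≤ t →
        (Subdiv G m).dist (Sum.inl z) (r' (n + z)) = (Subdiv G m).dist (Sum.inl z) (r (n + z)) := by
    intro r' t h z hz
    have h1 := (hist_succ_inj (hist_le_inj h (n + z + 1) (by omega))).2 0
    simp only [A, hist_length, Nat.add_mod_left, Nat.mod_eq_of_lt z.2] at h1
    exact h1
  by_cases hc : ∃ w, (Subdiv G m).dist (Sum.inl w) (r 0) ≤ 10 * n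
  · obtain ⟨w, hw⟩ := hc
    have hw2 := w.2
    have near : ∀ t, t < 2 * n → (Subdiv G m).dist (Sum.inl w) (r t) ≤ 12 * n := by
      intro t ht
      have := traj_dist' hH hr (Sum.inl w) 0 t (2 * n) (by omega) (by omega)
      omega
    have near' : ∀ r' t, ValidTraj (Subdiv G m) r' → n ≤ t → t < 2 * n →
        probeHist (Subdiv G m) A r' (t + 1) = probeHist (Subdiv G m) A r (t + 1) →
        (Subdiv G m).dist (Sum.inl w) (r' t) ≤ 14 * n := by
      intro r' t hr' h1 h2 h3
      have h4 := probe1 r' t h3 w (by omega)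
      have h5 := near w (by omega)
      have := traj_dist' hH hr' (Sum.inl w) w t (2 * n) (by omega) (by omega)
      omega
    by_cases hb : ∃ t, n ≤ t ∧ t < 2 * n ∧ r t = Sum.inl w
    · obtain ⟨t, h1, h2, h3⟩ := hb
      refine ⟨t, rset_of hr fun r' hr' hh => ?_⟩
      obtain ⟨z, rfl⟩ : ∃ z : Fin n, t = n + z := ⟨⟨t - n, by omega⟩, by simp only; omega⟩
      have h4 := probe2 r' _ hh z le_rfl
      have h5 := near' r' _ hr' h1 h2 hh
      rw [h3] at h4 ⊢
      rw [sub_dist_inl hG hm, dP_inl] at h4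
      exact near_eq hG hm z w _ (by omega) h4
    · push Not at hb
      have hnb : ∀ s, n ≤ s → s ≤ n + (n - 1) → ∀ z, r s ≠ Sum.inl z := by
        intro s h1 h2 z hz
        by_cases hzw : w = z
        · subst hzw
          exact hb s h1 (by omega) hz
        · have h3 := near s (by omega)
          rw [hz, sub_dist_inl hG hm, dP_inl] at h3
          have := Nat.le_mul_of_pos_right m (hG.pos_dist_of_ne hzw)
          omega
      obtain ⟨e, he⟩ := const_edge hr n (n - 1) hnb
      have fin : ∀ z : Fin n, ((z = e.1.1 ∧ w = e.1.2) ∨ (z = e.1.2 ∧ w = e.1.1)) →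
          ∃ t, RSet (Subdiv G m) A r t = {r t} := by
        intro z hz
        have hz2 := z.2
        refine ⟨n + z, rset_of hr fun r' hr' hh => ?_⟩
        have h4 := probe2 r' _ hh z le_rfl
        have h5 := near' r' _ hr' (by omega) (by omega) hh
        have h6 := near (n + z) (by omega)
        obtain ⟨i, hi⟩ := he (n + z) (by omega) (by omega)
        rw [hi] at h4 h6 ⊢
        have hi2 := i.2
        have hzw : G.dist z w = 1 := by
          rw [SimpleGraph.dist_eq_one_iff_adj]
          rcases hz with ⟨rfl, rfl⟩ | ⟨rfl, rfl⟩
          · exact e.2.1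
          · exact e.2.1.symm
        have hlt : (Subdiv G m).dist (Sum.inl z) (Sum.inr (e, i)) < m := by
          rcases hz with ⟨rfl, rfl⟩ | ⟨rfl, rfl⟩
          · rw [dist_e1 hG hm]; omega
          · rw [dist_e2 hG hm]; omega
        rcases hr't : r' (n + z) with u | ⟨e', i'⟩
        · exfalso
          rw [hr't, sub_dist_inl hG hm, dP_inl] at h5
          rw [hr't] at h4
          by_cases hwu : w = u
          · subst hwu
            rw [sub_dist_inl hG hm, dP_inl, hzw] at h4
            omega
          · have := Nat.le_mul_of_pos_right m (hG.pos_dist_of_ne hwu)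
            omega
        · rw [hr't] at h4 h5
          have m1 := star_mem hG hm w e' i' (by omega)
          have m2 := star_mem hG hm z e' i' (by omega)
          have hee : e = e' := by
            have o1 := e.2.2
            have o2 := e'.2.2
            apply Subtype.ext
            apply Prod.ext
            · rcases hz with ⟨h1, h2⟩ | ⟨h1, h2⟩ <;> rcases m1 with h3 | h3 <;>
                rcases m2 with h4 | h4 <;> omega
            · rcases hz with ⟨h1, h2⟩ | ⟨h1, h2⟩ <;> rcases m1 with h3 | h3 <;>
                rcases m2 with h4 | h4 <;> omega
          subst hee
          have hi2' := i'.2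
          have : i' = i := by
            apply Fin.ext
            rcases hz with ⟨rfl, rfl⟩ | ⟨rfl, rfl⟩
            · rw [dist_e1 hG hm, dist_e1 hG hm] at h4; omega
            · rw [dist_e2 hG hm, dist_e2 hG hm] at h4; omega
          rw [this]
      obtain ⟨i, hi⟩ := he n le_rfl (by omega)
      have h6 := near n (by omega)
      rw [hi] at h6
      rcases star_mem hG hm w e i (by omega) with h | h
      · exact fin e.1.2 (Or.inr ⟨rfl, h⟩)
      · exact fin e.1.1 (Or.inl ⟨rfl, h⟩)
  · push Not at hc
    have far : ∀ w t, t < 2 * n → 8 * n < (Subdiv G m).dist (Sum.inl w) (r t) := by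
      intro w t ht
      have := traj_dist' hH hr (Sum.inl w) t 0 (2 * n) (by omega) (by omega)
      have := hc w
      omega
    obtain ⟨e, he⟩ := const_edge hr 0 (2 * n - 1) (by
      intro s h1 h2 z hz
      have := far z s (by omega)
      rw [hz, SimpleGraph.dist_self] at this
      omega)
    have he2 := e.1.1.2
    refine ⟨n + e.1.1, rset_of hr fun r' hr' hh => ?_⟩
    obtain ⟨e', he'⟩ := const_edge hr' 0 (2 * n - 1) (by
      intro s h1 h2 z hz
      have hz2 := z.2
      have a1 := far z z (by omega)
      rw [← probe1 r' _ hh z (by omega)] at a1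
      have := traj_dist' hH hr' (Sum.inl z) s z (2 * n) (by omega) (by omega)
      rw [hz, SimpleGraph.dist_self] at this
      omega)
    have st : ∀ z : Fin n, (z = e.1.1 ∨ z = e.1.2) → z = e'.1.1 ∨ z = e'.1.2 := by
      intro z hz
      have hz2 := z.2
      obtain ⟨i, hi⟩ := he z (by omega) (by omega)
      obtain ⟨i', hi'⟩ := he' z (by omega) (by omega)
      have h4 := probe1 r' _ hh z (by omega)
      rw [hi, hi'] at h4
      apply star_mem hG hm z e' i'
      have := i.2
      rcases hz with rfl | rfl
      · rw [dist_e1 hG hm] at h4; omega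
      · rw [dist_e2 hG hm] at h4; omega
    have m1 := st e.1.1 (Or.inl rfl)
    have m2 := st e.1.2 (Or.inr rfl)
    have hee : e = e' := by
      have o1 := e.2.2
      have o2 := e'.2.2
      apply Subtype.ext
      apply Prod.ext
      · rcases m1 with h3 | h3 <;> rcases m2 with h4 | h4 <;> omega
      · rcases m1 with h3 | h3 <;> rcases m2 with h4 | h4 <;> omega
    subst hee
    obtain ⟨i, hi⟩ := he (n + e.1.1) (by omega) (by omega)
    obtain ⟨i', hi'⟩ := he' (n + e.1.1) (by omega) (by omega)
    have h4 := probe2 r' _ hh e.1.1 le_rfl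
    rw [hi, hi', dist_e1 hG hm, dist_e1 hG hm] at h4
    rw [hi, hi']
    have : i' = i := Fin.ext (by omega)
    rw [this]
/-! ### Lifting trajectories to the subdivision -/

section Lift

set_option linter.unusedSectionVars false

variable {V : Type*} [LinearOrder V] {G : SimpleGraph V} {m : ℕ}

open Classical in
/-- Point at distance `x` from `u` on the way to `v` (or `u` when the robber stays). -/
noncomputable def seg (G : SimpleGraph V) (m : ℕ) (u v : V) (x : ℕ) : SubVert V G m :=
  if h : G.Adj u v then threadVert G m u v h x else Sum.inl u

/-- The trajectory in the subdivision that corresponds to a trajectory in `G`. -/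
noncomputable def liftT (G : SimpleGraph V) (m : ℕ) (g : ℕ → V) (t : ℕ) : SubVert V G m :=
  seg G m (g (t / m)) (g (t / m + 1)) (t % m)

lemma seg_zero (u v : V) : seg G m u v 0 = Sum.inl u := by
  unfold seg
  split_ifs with h
  · simp [threadVert]
  · rfl

lemma seg_last (hm : 1 ≤ m) (u v : V) (h : v = u ∨ G.Adj u v) : seg G m u v m = Sum.inl v := by
  unfold seg
  split_ifs with h'
  · simp only [threadVert, le_refl]
    rw [dif_neg (by omega), dif_pos trivial]
  · rcases h with rfl | h
    · rfl
    · exact absurd h h'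

lemma seg_step (u v : V) (x : ℕ) (hx : x < m) :
    seg G m u v (x + 1) = seg G m u v x ∨ (Subdiv G m).Adj (seg G m u v x) (seg G m u v (x + 1)) := by
  unfold seg
  split_ifs with h
  · exact thread_step h x hx
  · exact Or.inl rfl

lemma lift_valid (hm : 1 ≤ m) {g : ℕ → V} (hg : ValidTraj G g) :
    ValidTraj (Subdiv G m) (liftT G m g) := by
  intro t
  have hlt := Nat.mod_lt t (show m > 0 by omega)
  have h1 := seg_step (G := G) (g (t / m)) (g (t / m + 1)) (t % m) hlt
  suffices h : liftT G m g (t + 1) = seg G m (g (t / m)) (g (t / m + 1)) (t % m + 1) by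
    rw [h]; exact h1
  unfold liftT
  have hd := Nat.div_add_mod t m
  rcases Nat.lt_or_ge (t % m + 1) m with h2 | h2
  · have e1 : (t + 1) / m = t / m := by
      rw [Nat.div_eq_iff (by omega)]
      have := Nat.mul_comm m (t / m)
      constructor <;> omega
    have e2 : (t + 1) % m = t % m + 1 := by
      have := Nat.div_add_mod (t + 1) m
      rw [e1] at this
      omega
    rw [e1, e2]
  · have e0 : t + 1 = m * (t / m + 1) := by rw [Nat.mul_add]; omega
    have e1 : (t + 1) / m = t / m + 1 := by
      rw [e0]; exact Nat.mul_div_cancel_left _ (by omega)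
    have e2 : (t + 1) % m = 0 := by rw [e0]; exact Nat.mul_mod_right _ _
    have e3 : t % m + 1 = m := by omega
    rw [e1, e2, e3, seg_zero, seg_last hm _ _ (hg _)]

lemma seg_end (u v : V) (x : ℕ) (hx : x < m) :
    u = eA (seg G m u v x) ∨ u = eB (seg G m u v x) := by
  unfold seg
  split_ifs with h
  · unfold threadVert
    split_ifs with h1 h2 h3
    · exact Or.inl rfl
    · omega
    · exact Or.inl rfl
    · exact Or.inr rfl
  · exact Or.inl rfl

/-- `dP` in terms of the two distances. -/
def dval (m y α β : ℕ) : ℕ := min (m * α + y) (m * β + (m - y))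

/-- Probe value for a moving robber. -/
def wval (m y x α β α' β' : ℕ) : ℕ := min (dval m y α β + x) (dval m y α' β' + (m - x))

lemma dist_seg_move (hG : G.Connected) (hm : 1 ≤ m) (p : SubVert V G m) {u v : V} (h : G.Adj u v)
    (hA : u ≠ eA p) (hB : u ≠ eB p) (x : ℕ) (hx : x < m) :
    (Subdiv G m).dist p (seg G m u v x) = wval m (eY p) x (G.dist (eA p) u) (G.dist (eB p) u)
      (G.dist (eA p) v) (G.dist (eB p) v) := by
  unfold seg
  rw [dif_pos h, sub_dist_thread hG hm p h hA hB x hx.le]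
  rfl

lemma dist_seg_stay (hG : G.Connected) (hm : 1 ≤ m) (p : SubVert V G m) {u v : V} (h : ¬ G.Adj u v)
    (x : ℕ) :
    (Subdiv G m).dist p (seg G m u v x) = dval m (eY p) (G.dist (eA p) u) (G.dist (eB p) u) := by
  unfold seg
  rw [dif_neg h, sub_dist_inl hG hm]
  rfl

lemma eY_le (hm : 1 ≤ m) (p : SubVert V G m) : eY p ≤ m := by
  rcases p with a | ⟨e, i⟩
  · exact Nat.zero_le _
  · have := i.2
    simp only [eY]
    omega

end Lift

/-! ### Counting possible probe values -/

/-- Branching bound when the starting distances are known. -/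
def b1 (δ : ℕ) : ℕ := if δ = 1 then 4 else 5

/-- Branching bound when the starting distances are not known. -/
def b2 (δ : ℕ) : ℕ := if δ = 1 then 4 else 4 * δ + 2

lemma b_mul_le (δ : ℕ) (h : 1 ≤ δ) : b1 δ * b2 δ ≤ 16 * δ ^ 2 := by
  unfold b1 b2
  split_ifs with h1
  · subst h1; norm_num
  · have : 2 ≤ δ := by omega
    nlinarith

lemma vals_one (m y x : ℕ) : ∃ F : Finset ℕ, F.card ≤ 4 ∧ ∀ α β α' β',
    α = 1 → β = 1 → α' ≤ 1 → β' ≤ 1 → wval m y x α β α' β' ∈ F := by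
  refine ⟨{wval m y x 1 1 0 0, wval m y x 1 1 0 1, wval m y x 1 1 1 0, wval m y x 1 1 1 1},
    Finset.card_le_four, ?_⟩
  rintro α β α' β' rfl rfl h1 h2
  interval_cases α' <;> interval_cases β' <;> simp

lemma vals1 (δ m y x α β : ℕ) (hx : x ≤ m) (hα : 1 ≤ α) (hα' : α ≤ δ)
    (hβ : 1 ≤ β) (hβ' : β ≤ δ) :
    ∃ F : Finset ℕ, F.card ≤ b1 δ ∧ ∀ α' β', α' ≤ δ → β' ≤ δ → α' ≤ α + 1 → α ≤ α' + 1 →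
      β' ≤ β + 1 → β ≤ β' + 1 → wval m y x α β α' β' ∈ F := by
  unfold b1
  split_ifs with h1
  · obtain ⟨F, h2, h3⟩ := vals_one m y x
    exact ⟨F, h2, fun α' β' _ _ _ _ _ _ => h3 _ _ _ _ (by omega) (by omega) (by omega) (by omega)⟩
  · obtain ⟨a, rfl⟩ := Nat.exists_eq_add_of_le hα
    obtain ⟨b, rfl⟩ := Nat.exists_eq_add_of_le hβ
    refine ⟨{dval m y (1 + a) (1 + b) + x, m * a + y + (m - x), m * (1 + a) + y + (m - x),
      m * b + (m - y) + (m - x), m * (1 + b) + (m - y) + (m - x)}, Finset.card_le_five, ?_⟩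
    intro α' β' _ _ h2 h3 h4 h5
    have c1 : α' = a ∨ α' = 1 + a ∨ α' = 2 + a := by omega
    have c2 : β' = b ∨ β' = 1 + b ∨ β' = 2 + b := by omega
    simp only [Finset.mem_insert, Finset.mem_singleton, wval, dval]
    rcases c1 with rfl | rfl | rfl <;> rcases c2 with rfl | rfl | rfl <;>
      simp only [Nat.mul_add, Nat.mul_one] <;> omega

lemma vals2 (δ m y x : ℕ) :
    ∃ F : Finset ℕ, F.card ≤ b2 δ ∧ ∀ α β α' β', 1 ≤ α → α ≤ δ → 1 ≤ β → β ≤ δ →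
      α' ≤ δ → β' ≤ δ → wval m y x α β α' β' ∈ F := by
  unfold b2
  split_ifs with h1
  · obtain ⟨F, h2, h3⟩ := vals_one m y x
    exact ⟨F, h2, fun α β α' β' _ _ _ _ _ _ =>
      h3 _ _ _ _ (by omega) (by omega) (by omega) (by omega)⟩
  · refine ⟨((Finset.Icc 1 δ).image (fun α => m * α + y + x) ∪
      (Finset.Icc 1 δ).image (fun α => m * α + (m - y) + x)) ∪
      ((Finset.range (δ + 1)).image (fun α => m * α + y + (m - x)) ∪
      (Finset.range (δ + 1)).image (fun α => m * α + (m - y) + (m - x))), ?_, ?_⟩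
    · refine (Finset.card_union_le _ _).trans ?_
      have a1 := Finset.card_union_le ((Finset.Icc 1 δ).image (fun α => m * α + y + x))
        ((Finset.Icc 1 δ).image (fun α => m * α + (m - y) + x))
      have a2 := Finset.card_union_le ((Finset.range (δ + 1)).image (fun α => m * α + y + (m - x)))
        ((Finset.range (δ + 1)).image (fun α => m * α + (m - y) + (m - x)))
      have i1 := Finset.card_image_le (s := Finset.Icc 1 δ) (f := fun α => m * α + y + x)
      have i2 := Finset.card_image_le (s := Finset.Icc 1 δ) (f := fun α => m * α + (m - y) + x)
      have i3 := Finset.card_image_le (s := Finset.range (δ + 1))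
        (f := fun α => m * α + y + (m - x))
      have i4 := Finset.card_image_le (s := Finset.range (δ + 1))
        (f := fun α => m * α + (m - y) + (m - x))
      rw [Nat.card_Icc] at i1 i2
      rw [Finset.card_range] at i3 i4
      omega
    · intro α β α' β' h1 h2 h3 h4 h5 h6
      simp only [Finset.mem_union, Finset.mem_image, Finset.mem_Icc, Finset.mem_range]
      have : wval m y x α β α' β' = m * α + y + x ∨ wval m y x α β α' β' = m * β + (m - y) + x ∨
          wval m y x α β α' β' = m * α' + y + (m - x) ∨
          wval m y x α β α' β' = m * β' + (m - y) + (m - x) := by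
        unfold wval dval
        omega
      rcases this with h | h | h | h
      · exact Or.inl (Or.inl ⟨α, ⟨h1, h2⟩, h.symm⟩)
      · exact Or.inl (Or.inr ⟨β, ⟨h3, h4⟩, h.symm⟩)
      · exact Or.inr (Or.inl ⟨α', by omega, h.symm⟩)
      · exact Or.inr (Or.inr ⟨β', by omega, h.symm⟩)

lemma vals2_stay (δ m y : ℕ) :
    ∃ F : Finset ℕ, F.card ≤ b2 δ ∧ ∀ α β, 1 ≤ α → α ≤ δ → 1 ≤ β → β ≤ δ →
      dval m y α β ∈ F := by
  refine ⟨(Finset.Icc 1 δ).image (fun α => m * α + y) ∪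
      (Finset.Icc 1 δ).image (fun α => m * α + (m - y)), ?_, ?_⟩
  · refine (Finset.card_union_le _ _).trans ?_
    have i1 := Finset.card_image_le (s := Finset.Icc 1 δ) (f := fun α => m * α + y)
    have i2 := Finset.card_image_le (s := Finset.Icc 1 δ) (f := fun α => m * α + (m - y))
    rw [Nat.card_Icc] at i1 i2
    unfold b2
    split_ifs <;> omega
  · intro α β h1 h2 h3 h4
    simp only [Finset.mem_union, Finset.mem_image, Finset.mem_Icc]
    have : dval m y α β = m * α + y ∨ dval m y α β = m * β + (m - y) := by
      unfold dval
      omega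
    rcases this with h | h
    · exact Or.inl ⟨α, ⟨h1, h2⟩, h.symm⟩
    · exact Or.inr ⟨β, ⟨h3, h4⟩, h.symm⟩

/-- `S` has at most `N` elements. -/
def CardLe {X : Type*} (S : Set X) (N : ℕ) : Prop := ∃ F : Finset X, S ⊆ ↑F ∧ F.card ≤ N

lemma CardLe.mono {X : Type*} {S S' : Set X} {N N' : ℕ} (h : CardLe S N) (h1 : S' ⊆ S)
    (h2 : N ≤ N') : CardLe S' N' := by
  obtain ⟨F, hF, hc⟩ := h
  exact ⟨F, h1.trans hF, hc.trans h2⟩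

open Classical in
lemma CardLe.bind {X Y : Type*} {S : Set X} {S' : Set Y} {N M : ℕ} (h : CardLe S N)
    (f : X → Set Y) (hf : ∀ x ∈ S, CardLe (f x) M) (hS' : ∀ y ∈ S', ∃ x ∈ S, y ∈ f x) :
    CardLe S' (N * M) := by
  obtain ⟨F, hF, hc⟩ := h
  choose! φ hφ1 hφ2 using hf
  refine ⟨(F.filter (· ∈ S)).biUnion φ, ?_, ?_⟩
  · intro y hy
    obtain ⟨x, hx, hyx⟩ := hS' y hy
    simp only [Finset.coe_biUnion, Set.mem_iUnion]
    exact ⟨x, by simpa using ⟨hF hx, hx⟩, hφ1 x hx hyx⟩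
  · refine (Finset.card_biUnion_le_card_mul _ _ M ?_).trans ?_
    · intro x hx
      exact hφ2 x (Finset.mem_filter.1 hx).2
    · exact Nat.mul_le_mul_right _ ((Finset.card_filter_le _ _).trans hc)

open Classical in
lemma CardLe.union {X : Type*} {S S' S'' : Set X} {N N' : ℕ} (h : CardLe S N) (h' : CardLe S' N')
    (hs : S'' ⊆ S ∪ S') : CardLe S'' (N + N') := by
  obtain ⟨F, hF, hc⟩ := h
  obtain ⟨F', hF', hc'⟩ := h'
  refine ⟨F ∪ F', ?_, (Finset.card_union_le _ _).trans (by omega)⟩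
  intro x hx
  rw [Finset.coe_union]
  rcases hs hx with h | h
  · exact Or.inl (hF h)
  · exact Or.inr (hF' h)

lemma CardLe.of_subsingleton {X : Type*} {S : Set X} (h : ∀ x ∈ S, ∀ y ∈ S, x = y) :
    CardLe S 1 := by
  rcases S.eq_empty_or_nonempty with rfl | ⟨x, hx⟩
  · exact ⟨∅, by simp, by simp⟩
  · exact ⟨{x}, fun y hy => by simpa using h y hy x hx, by simp⟩
/-! ### The simulation strategy -/

section Sim

set_option linter.unusedSectionVars false

variable {V : Type*} [LinearOrder V] {G : SimpleGraph V} {m : ℕ}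

/-- History in the subdivision game of the lifted trajectory. -/
noncomputable def hst (A : CopStrategy (SubVert V G m) 1) (g : ℕ → V) (j : ℕ) :
    List (Fin 1 → ℕ) :=
  probeHist (Subdiv G m) A (liftT G m g) j

open Classical in
/-- A position compatible with the history `L`. -/
noncomputable def cand (A : CopStrategy (SubVert V G m) 1) (L : List (Fin 1 → ℕ)) :
    SubVert V G m :=
  if h : ∃ ρ, ValidTraj (Subdiv G m) ρ ∧ probeHist (Subdiv G m) A ρ L.length = L
  then h.choose (L.length - 1) else A L 0

/-- Branch vertices relevant for the history `L`. -/
noncomputable def RR (A : CopStrategy (SubVert V G m) 1) (L : List (Fin 1 → ℕ)) : Finset V :=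
  {eA (A L 0), eB (A L 0), eA (cand A L), eB (cand A L)}

/-- The robber has not been at a relevant vertex. -/
def Good (A : CopStrategy (SubVert V G m) 1) (T : ℕ) (g : ℕ → V) (j : ℕ) : Prop :=
  ∀ i, (T - 1) * m ≤ i → i < j → g T ∉ RR A (hst A g i)

/-- Vertices to be probed at time `T` when `K` is the set of compatible trajectories. -/
def EE (A : CopStrategy (SubVert V G m) 1) (T : ℕ) (K : Set (ℕ → V)) : Set V :=
  {z | ∃ g ∈ K, ∃ j, (T - 1) * m ≤ j ∧ j ≤ (T + 1) * m ∧ Good A T g j ∧ z ∈ RR A (hst A g j)}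

lemma hst_succ (A : CopStrategy (SubVert V G m) 1) (g : ℕ → V) (j : ℕ) :
    hst A g (j + 1) = hst A g j ++
      [fun _ => (Subdiv G m).dist (A (hst A g j) 0) (liftT G m g j)] := by
  unfold hst
  rw [probeHist]
  congr 2
  funext i
  rw [Subsingleton.elim i 0]

lemma mem_RR_A (A : CopStrategy (SubVert V G m) 1) (L : List (Fin 1 → ℕ)) :
    eA (A L 0) ∈ RR A L := by simp [RR]

lemma mem_RR_B (A : CopStrategy (SubVert V G m) 1) (L : List (Fin 1 → ℕ)) :
    eB (A L 0) ∈ RR A L := by simp [RR]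

open Classical in
/-- The rounds in which the robber moves. -/
noncomputable def patt (G : SimpleGraph V) (T : ℕ) (g : ℕ → V) : Finset ℕ :=
  (Finset.range (T + 1)).filter (fun t => G.Adj (g t) (g (t + 1)))

lemma patt_iff {T : ℕ} {g g' : ℕ → V} (h : patt G T g = patt G T g') (t : ℕ) (ht : t ≤ T) :
    G.Adj (g t) (g (t + 1)) ↔ G.Adj (g' t) (g' (t + 1)) := by
  have := Finset.ext_iff.1 h t
  simp only [patt, Finset.mem_filter, Finset.mem_range] at this
  constructor
  · intro h1; exact (this.1 ⟨by omega, h1⟩).2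
  · intro h1; exact (this.2 ⟨by omega, h1⟩).2

/-- Histories of length `j` with given move pattern. -/
def LL (A : CopStrategy (SubVert V G m) 1) (T : ℕ) (K : Set (ℕ → V)) (Q : Finset ℕ) (j : ℕ) :
    Set (List (Fin 1 → ℕ)) :=
  {L | ∃ g ∈ K, patt G T g = Q ∧ Good A T g j ∧ hst A g j = L}

/-- Histories of length at most `j` with given move pattern. -/
def UU (A : CopStrategy (SubVert V G m) 1) (T : ℕ) (K : Set (ℕ → V)) (Q : Finset ℕ) (j : ℕ) :
    Set (List (Fin 1 → ℕ)) :=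
  {L | ∃ i, (T - 1) * m ≤ i ∧ i ≤ j ∧ L ∈ LL A T K Q i}

lemma LU_step (A : CopStrategy (SubVert V G m) 1) (T : ℕ) (K : Set (ℕ → V)) (Q : Finset ℕ)
    (j N B : ℕ) (hB : 2 ≤ B)
    (hL : CardLe (LL A T K Q j) N) (hU : CardLe (UU A T K Q j) (2 * N))
    (h : ∀ L ∈ LL A T K Q j, ∃ F : Finset ℕ, F.card ≤ B ∧ ∀ g ∈ K, patt G T g = Q →
      Good A T g (j + 1) → hst A g j = L → (Subdiv G m).dist (A L 0) (liftT G m g j) ∈ F) :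
    CardLe (LL A T K Q (j + 1)) (N * B) ∧ CardLe (UU A T K Q (j + 1)) (2 * (N * B)) := by
  classical
  have h1 : CardLe (LL A T K Q (j + 1)) (N * B) := by
    refine hL.bind (fun L => {L' | ∃ g ∈ K, patt G T g = Q ∧ Good A T g (j + 1) ∧
      hst A g j = L ∧ L' = hst A g (j + 1)}) ?_ ?_
    · intro L hLL
      obtain ⟨F, hF, hF'⟩ := h L hLL
      refine ⟨F.image (fun a => L ++ [fun _ => a]), ?_, Finset.card_image_le.trans hF⟩
      rintro L' ⟨g, h1, h2, h3, h4, rfl⟩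
      rw [Finset.coe_image]
      refine ⟨_, hF' g h1 h2 h3 h4, ?_⟩
      rw [hst_succ, h4]
    · rintro L' ⟨g, h1, h2, h3, rfl⟩
      exact ⟨hst A g j, ⟨g, h1, h2, fun i hi hi' => h3 i hi (by omega), rfl⟩,
        g, h1, h2, h3, rfl, rfl⟩
  refine ⟨h1, ?_⟩
  refine (hU.union h1 ?_).mono subset_rfl ?_
  · rintro L ⟨i, hi, hi', hLi⟩
    rcases Nat.lt_or_ge i (j + 1) with h2 | h2
    · exact Or.inl ⟨i, hi, by omega, hLi⟩
    · have : i = j + 1 := by omega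
      subst this
      exact Or.inr hLi
  · nlinarith [Nat.mul_le_mul_left N hB]

lemma LU_steps (A : CopStrategy (SubVert V G m) 1) (T : ℕ) (K : Set (ℕ → V)) (Q : Finset ℕ)
    (a N B : ℕ) (hB : 2 ≤ B) (d : ℕ)
    (hL : CardLe (LL A T K Q a) N) (hU : CardLe (UU A T K Q a) (2 * N))
    (h : ∀ j, a ≤ j → j < a + d →
      ∀ L ∈ LL A T K Q j, ∃ F : Finset ℕ, F.card ≤ B ∧ ∀ g ∈ K, patt G T g = Q →
      Good A T g (j + 1) → hst A g j = L → (Subdiv G m).dist (A L 0) (liftT G m g j) ∈ F) :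
    CardLe (LL A T K Q (a + d)) (N * B ^ d) ∧ CardLe (UU A T K Q (a + d)) (2 * (N * B ^ d)) := by
  induction d with
  | zero => simpa using ⟨hL, hU⟩
  | succ d ih =>
    obtain ⟨h1, h2⟩ := ih (fun j h1 h2 => h j h1 (by omega))
    have := LU_step A T K Q (a + d) (N * B ^ d) B hB h1 h2 (h (a + d) (by omega) (by omega))
    rw [pow_succ, ← Nat.mul_assoc N]
    exact this

lemma two_le_b1 (δ : ℕ) : 2 ≤ b1 δ := by unfold b1; split_ifs <;> omega

lemma two_le_b2 (δ : ℕ) : 2 ≤ b2 δ := by unfold b2; split_ifs <;> omega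

lemma block_div {m t j : ℕ} (h1 : t * m ≤ j) (h2 : j < (t + 1) * m) : j / m = t := by
  have hm : 0 < m := by
    rcases Nat.eq_zero_or_pos m with rfl | h
    · simp at h2
    · exact h
  rw [Nat.div_eq_iff hm]
  rw [Nat.add_mul] at h2
  constructor <;> omega

lemma count (hG : G.Connected) (hm : 1 ≤ m) (δ : ℕ) (hδ : 1 ≤ δ)
    (hdist : ∀ u v, G.dist u v ≤ δ)
    (A : CopStrategy (SubVert V G m) 1) (T : ℕ) (K : Set (ℕ → V))
    (hst1 : ∀ t < T, ∀ g' ∈ K, ∀ g'' ∈ K, ∀ j, (t - 1) * m ≤ j → j ≤ (t + 1) * m →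
      ∀ z ∈ RR A (hst A g' j), G.dist z (g' t) = G.dist z (g'' t) ∧ g' t ≠ z) :
    CardLe (EE A T K) (16 * 2 ^ T * (16 * δ ^ 2) ^ m) := by
  -- the part of the history that is determined by the pattern
  have claim1 : ∀ g' ∈ K, ∀ g'' ∈ K, patt G T g' = patt G T g'' →
      ∀ j, j ≤ (T - 1) * m → hst A g' j = hst A g'' j := by
    intro g' hg' g'' hg'' hp j
    induction j with
    | zero => intro _; rfl
    | succ j ih =>
      intro hj
      have ih := ih (by omega)
      have hx : j % m < m := Nat.mod_lt _ (by omega)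
      obtain ⟨t, ht⟩ : ∃ t, t = j / m := ⟨_, rfl⟩
      have hd := Nat.div_add_mod j m
      rw [← ht, Nat.mul_comm] at hd
      have htT : t < T - 1 := by
        rw [ht]
        exact (Nat.div_lt_iff_lt_mul (by omega)).2 (by omega)
      have hz1 : ∀ z ∈ RR A (hst A g' j), G.dist z (g' t) = G.dist z (g'' t) ∧ g' t ≠ z :=
        hst1 t (by omega) g' hg' g'' hg'' j
          (le_trans (Nat.mul_le_mul_right m (Nat.sub_le t 1)) (by omega))
          (by rw [Nat.add_mul]; omega)
      have hz1' : ∀ z ∈ RR A (hst A g'' j), G.dist z (g'' t) = G.dist z (g' t) ∧ g'' t ≠ z :=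
        hst1 t (by omega) g'' hg'' g' hg' j
          (le_trans (Nat.mul_le_mul_right m (Nat.sub_le t 1)) (by omega))
          (by rw [Nat.add_mul]; omega)
      have hz2 : ∀ z ∈ RR A (hst A g' j), G.dist z (g' (t + 1)) = G.dist z (g'' (t + 1)) ∧
          g' (t + 1) ≠ z :=
        hst1 (t + 1) (by omega) g' hg' g'' hg'' j
          (by rw [Nat.add_sub_cancel]; omega)
          (by rw [Nat.add_mul, Nat.add_mul]; omega)
      rw [← ih] at hz1'
      rw [hst_succ, hst_succ, ← ih]
      congr 2
      funext _
      unfold liftT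
      rw [← ht]
      have mA := mem_RR_A A (hst A g' j)
      have mB := mem_RR_B A (hst A g' j)
      by_cases hmv : G.Adj (g' t) (g' (t + 1))
      · have hmv' := (patt_iff hp t (by omega)).1 hmv
        rw [dist_seg_move hG hm _ hmv (hz1 _ mA).2 (hz1 _ mB).2 _ hx,
          dist_seg_move hG hm _ hmv' (hz1' _ mA).2 (hz1' _ mB).2 _ hx,
          (hz1 _ mA).1, (hz1 _ mB).1, (hz2 _ mA).1, (hz2 _ mB).1]
      · have hmv' := fun h => hmv ((patt_iff hp t (by omega)).2 h)
        rw [dist_seg_stay hG hm _ hmv, dist_seg_stay hG hm _ hmv', (hz1 _ mA).1, (hz1 _ mB).1]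
  have hpos : ∀ {z u : V}, u ≠ z → 1 ≤ G.dist z u := fun h => hG.pos_dist_of_ne h.symm
  have main : ∀ Q : Finset ℕ, CardLe (UU A T K Q ((T + 1) * m)) (2 * (16 * δ ^ 2) ^ m) := by
    intro Q
    have s0 : CardLe (LL A T K Q ((T - 1) * m)) 1 := by
      apply CardLe.of_subsingleton
      rintro L ⟨g, h1, h2, -, rfl⟩ L' ⟨g', h1', h2', -, rfl⟩
      exact claim1 g h1 g' h1' (h2.trans h2'.symm) _ le_rfl
    have s0' : CardLe (UU A T K Q ((T - 1) * m)) (2 * 1) := by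
      refine s0.mono ?_ (by omega)
      rintro L ⟨i, h1, h2, h3⟩
      have : i = (T - 1) * m := by omega
      rw [← this]
      exact h3
    have s1 : CardLe (LL A T K Q (T * m)) (1 * b1 δ ^ m) ∧
        CardLe (UU A T K Q (T * m)) (2 * (1 * b1 δ ^ m)) := by
      rcases Nat.eq_zero_or_pos T with hT | hT
      · have hp : 1 ≤ 1 * b1 δ ^ m := by
          rw [Nat.one_mul]
          exact Nat.one_le_pow _ _ (by have := two_le_b1 δ; omega)
        have e : (T - 1) * m = T * m := by rw [hT]
        rw [e] at s0 s0'
        exact ⟨s0.mono subset_rfl hp, s0'.mono subset_rfl (by omega)⟩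
      · have e : T * m = (T - 1) * m + m := by
          obtain ⟨t, rfl⟩ : ∃ t, T = t + 1 := ⟨T - 1, by omega⟩
          rw [Nat.add_sub_cancel, Nat.add_mul, Nat.one_mul]
        rw [e]
        apply LU_steps A T K Q _ 1 (b1 δ) (two_le_b1 δ) m s0 s0'
        rintro j hj1 hj2 L ⟨g₀, hg₀, hQ₀, -, rfl⟩
        rw [← e] at hj2
        have hx : j % m < m := Nat.mod_lt _ (by omega)
        have hdiv : j / m = T - 1 := block_div hj1 (by rw [Nat.sub_add_cancel hT]; exact hj2)
        have hz : ∀ g ∈ K, hst A g j = hst A g₀ j → ∀ z ∈ RR A (hst A g₀ j),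
            G.dist z (g (T - 1)) = G.dist z (g₀ (T - 1)) ∧ g (T - 1) ≠ z := by
          intro g hg hgj z hzz
          rw [← hgj] at hzz
          exact hst1 (T - 1) (by omega) g hg g₀ hg₀ j
            (le_trans (Nat.mul_le_mul_right m (Nat.sub_le _ 1)) hj1)
            (by rw [Nat.sub_add_cancel hT]; omega) z hzz
        have mA := mem_RR_A A (hst A g₀ j)
        have mB := mem_RR_B A (hst A g₀ j)
        obtain ⟨p, hp⟩ : ∃ p, p = A (hst A g₀ j) 0 := ⟨_, rfl⟩
        rw [← hp] at mA mB ⊢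
        by_cases hmv₀ : G.Adj (g₀ (T - 1)) (g₀ (T - 1 + 1))
        · obtain ⟨F, hF, hF'⟩ := vals1 δ m (eY p) (j % m) (G.dist (eA p) (g₀ (T - 1)))
            (G.dist (eB p) (g₀ (T - 1))) hx.le (hpos (hz g₀ hg₀ rfl _ mA).2) (hdist _ _)
            (hpos (hz g₀ hg₀ rfl _ mB).2) (hdist _ _)
          refine ⟨F, hF, fun g hg hgQ _ hgj => ?_⟩
          have hmv := (patt_iff (hQ₀.trans hgQ.symm) (T - 1) (by omega)).1 hmv₀
          have zA := hz g hg hgj _ mA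
          have zB := hz g hg hgj _ mB
          unfold liftT
          rw [hdiv, dist_seg_move hG hm _ hmv zA.2 zB.2 _ hx, zA.1, zB.1]
          refine hF' _ _ (hdist _ _) (hdist _ _) ?_ ?_ ?_ ?_
          · rw [← zA.1]; exact dist_step hG hmv.symm _
          · rw [← zA.1]; exact dist_step hG hmv _
          · rw [← zB.1]; exact dist_step hG hmv.symm _
          · rw [← zB.1]; exact dist_step hG hmv _
        · refine ⟨{dval m (eY p) (G.dist (eA p) (g₀ (T - 1))) (G.dist (eB p) (g₀ (T - 1)))},
            by rw [Finset.card_singleton]; have := two_le_b1 δ; omega, fun g hg hgQ _ hgj => ?_⟩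
          have hmv := fun h => hmv₀ ((patt_iff (hQ₀.trans hgQ.symm) (T - 1) (by omega)).2 h)
          have zA := hz g hg hgj _ mA
          have zB := hz g hg hgj _ mB
          unfold liftT
          rw [hdiv, dist_seg_stay hG hm _ hmv, zA.1, zB.1]
          exact Finset.mem_singleton_self _
    have s2 : CardLe (UU A T K Q (T * m + m)) (2 * (1 * b1 δ ^ m * b2 δ ^ m)) := by
      refine (LU_steps A T K Q _ _ (b2 δ) (two_le_b2 δ) m s1.1 s1.2 ?_).2
      rintro j hj1 hj2 L ⟨g₀, hg₀, hQ₀, -, rfl⟩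
      have hx : j % m < m := Nat.mod_lt _ (by omega)
      have hdiv : j / m = T := block_div hj1 (by rw [Nat.add_mul]; omega)
      have hz : ∀ g, Good A T g (j + 1) → hst A g j = hst A g₀ j → ∀ z ∈ RR A (hst A g₀ j),
          g T ≠ z := by
        intro g hg hgj z hzz hcon
        rw [← hgj, ← hcon] at hzz
        exact hg j (le_trans (Nat.mul_le_mul_right m (Nat.sub_le _ 1)) hj1) (by omega) hzz
      have mA := mem_RR_A A (hst A g₀ j)
      have mB := mem_RR_B A (hst A g₀ j)
      obtain ⟨p, hp⟩ : ∃ p, p = A (hst A g₀ j) 0 := ⟨_, rfl⟩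
      rw [← hp] at mA mB ⊢
      by_cases hmv₀ : G.Adj (g₀ T) (g₀ (T + 1))
      · obtain ⟨F, hF, hF'⟩ := vals2 δ m (eY p) (j % m)
        refine ⟨F, hF, fun g hg hgQ hgG hgj => ?_⟩
        have hmv := (patt_iff (hQ₀.trans hgQ.symm) T le_rfl).1 hmv₀
        have zA := hz g hgG hgj _ mA
        have zB := hz g hgG hgj _ mB
        unfold liftT
        rw [hdiv, dist_seg_move hG hm _ hmv zA zB _ hx]
        exact hF' _ _ _ _ (hpos zA) (hdist _ _) (hpos zB) (hdist _ _) (hdist _ _) (hdist _ _)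
      · obtain ⟨F, hF, hF'⟩ := vals2_stay δ m (eY p)
        refine ⟨F, hF, fun g hg hgQ hgG hgj => ?_⟩
        have hmv := fun h => hmv₀ ((patt_iff (hQ₀.trans hgQ.symm) T le_rfl).2 h)
        have zA := hz g hgG hgj _ mA
        have zB := hz g hgG hgj _ mB
        unfold liftT
        rw [hdiv, dist_seg_stay hG hm _ hmv]
        exact hF' _ _ (hpos zA) (hdist _ _) (hpos zB) (hdist _ _)
    rw [Nat.add_mul T 1 m, Nat.one_mul]
    refine s2.mono subset_rfl ?_
    rw [Nat.one_mul, ← Nat.mul_pow]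
    exact Nat.mul_le_mul_left 2 (Nat.pow_le_pow_left (b_mul_le δ hδ) m)
  have hpat : CardLe (Set.range (patt G T)) (2 ^ (T + 1)) := by
    refine ⟨(Finset.range (T + 1)).powerset, ?_, by simp⟩
    rintro _ ⟨g, rfl⟩
    rw [Finset.mem_coe, Finset.mem_powerset]
    unfold patt
    classical
    exact Finset.filter_subset _ _
  have hall : CardLe {L | ∃ Q, L ∈ UU A T K Q ((T + 1) * m)}
      (2 ^ (T + 1) * (2 * (16 * δ ^ 2) ^ m)) := by
    refine hpat.bind (fun Q => UU A T K Q ((T + 1) * m)) (fun Q _ => main Q) ?_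
    rintro L ⟨Q, i, h1, h2, g, hg, hgQ, h3⟩
    exact ⟨Q, ⟨g, hgQ⟩, i, h1, h2, g, hg, hgQ, h3⟩
  have hE : CardLe (EE A T K) (2 ^ (T + 1) * (2 * (16 * δ ^ 2) ^ m) * 4) := by
    refine hall.bind (fun L => ↑(RR A L)) (fun L _ => ⟨RR A L, subset_rfl, Finset.card_le_four⟩) ?_
    rintro z ⟨g, hg, j, h1, h2, h3, h4⟩
    exact ⟨hst A g j, ⟨patt G T g, j, h1, h2, g, hg, rfl, h3, rfl⟩, h4⟩
  refine hE.mono subset_rfl ?_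
  rw [pow_succ]
  apply le_of_eq
  ring

open Classical in
/-- The probes at a given state. -/
noncomputable def prb [Nonempty V] (A : CopStrategy (SubVert V G m) 1) (k : ℕ)
    (σ : ℕ × Set (ℕ → V)) : Fin k → V :=
  if h : ∃ f : Fin k → V, EE A σ.1 σ.2 ⊆ Set.range f then h.choose
  else fun _ => Classical.arbitrary V

/-- State update. -/
noncomputable def upd [Nonempty V] (A : CopStrategy (SubVert V G m) 1) (k : ℕ)
    (σ : ℕ × Set (ℕ → V)) (a : Fin k → ℕ) : ℕ × Set (ℕ → V) :=
  (σ.1 + 1, {g | g ∈ σ.2 ∧ ∀ i, G.dist (prb A k σ i) (g σ.1) = a i})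

/-- State after the history `L`. -/
noncomputable def sta [Nonempty V] (A : CopStrategy (SubVert V G m) 1) (k : ℕ)
    (L : List (Fin k → ℕ)) : ℕ × Set (ℕ → V) :=
  L.foldl (upd A k) (0, {g | ValidTraj G g})

/-- The simulating strategy. -/
noncomputable def BB [Nonempty V] (A : CopStrategy (SubVert V G m) 1) (k : ℕ) :
    CopStrategy V k := fun L => prb A k (sta A k L)

/-- Trajectories compatible with the first `t` rounds. -/
noncomputable def KK [Nonempty V] (A : CopStrategy (SubVert V G m) 1) (k : ℕ) (g : ℕ → V)
    (t : ℕ) : Set (ℕ → V) := (sta A k (probeHist G (BB A k) g t)).2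

lemma sta_fst [Nonempty V] (A : CopStrategy (SubVert V G m) 1) (k : ℕ) (g : ℕ → V) (t : ℕ) :
    (sta A k (probeHist G (BB A k) g t)).1 = t := by
  induction t with
  | zero => rfl
  | succ t ih =>
    rw [probeHist, sta, List.foldl_append]
    change (sta A k (probeHist G (BB A k) g t)).1 + 1 = t + 1
    rw [ih]

lemma BB_eq [Nonempty V] (A : CopStrategy (SubVert V G m) 1) (k : ℕ) (g : ℕ → V) (t : ℕ) :
    BB A k (probeHist G (BB A k) g t) = prb A k (t, KK A k g t) := by
  have h : sta A k (probeHist G (BB A k) g t) = (t, KK A k g t) :=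
    Prod.ext (sta_fst A k g t) rfl
  rw [← h]
  rfl

lemma KK_succ [Nonempty V] (A : CopStrategy (SubVert V G m) 1) (k : ℕ) (g : ℕ → V) (t : ℕ) :
    KK A k g (t + 1) = {g' | g' ∈ KK A k g t ∧ ∀ i,
      G.dist (prb A k (t, KK A k g t) i) (g' t) = G.dist (prb A k (t, KK A k g t) i) (g t)} := by
  have h : sta A k (probeHist G (BB A k) g t) = (t, KK A k g t) :=
    Prod.ext (sta_fst A k g t) rfl
  conv_lhs => rw [KK, probeHist, sta, List.foldl_append]
  change (upd A k (sta A k (probeHist G (BB A k) g t)) _).2 = _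
  rw [h, BB_eq]
  rfl

lemma sim [Nonempty V] (hG : G.Connected) (hm : 1 ≤ m) (δ : ℕ) (hδ : 1 ≤ δ)
    (hdist : ∀ u v, G.dist u v ≤ δ)
    (A : CopStrategy (SubVert V G m) 1) (N : ℕ)
    (hA : ∀ r, ValidTraj (Subdiv G m) r → ∃ t < N, RSet (Subdiv G m) A r t = {r t}) :
    Localizable G (16 * 2 ^ (N / m) * (16 * δ ^ 2) ^ m) := by
  obtain ⟨k, hk⟩ : ∃ k, k = 16 * 2 ^ (N / m) * (16 * δ ^ 2) ^ m := ⟨_, rfl⟩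
  rw [← hk]
  refine ⟨BB A k, fun g hg => ?_⟩
  by_contra! hcon
  have NC : ∀ t i, prb A k (t, KK A k g t) i ≠ g t := by
    intro t i hi
    apply hcon t
    apply rset_of hg
    intro r' hr' hh
    have h1 := (hist_succ_inj hh).2 i
    rw [BB_eq, hi, SimpleGraph.dist_self] at h1
    exact (hG.dist_eq_zero_iff.1 h1).symm
  have hKanti : ∀ t d, KK A k g (t + d) ⊆ KK A k g t := by
    intro t d
    induction d with
    | zero => exact subset_rfl
    | succ d ih =>
      rw [← Nat.add_assoc, KK_succ]
      exact fun g' hg' => ih hg'.1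
  have hKg : ∀ t, g ∈ KK A k g t := by
    intro t
    induction t with
    | zero => exact hg
    | succ t ih => rw [KK_succ]; exact ⟨ih, fun _ => rfl⟩
  -- consequences of coverage
  have cons : ∀ t, EE A t (KK A k g t) ⊆ Set.range (prb A k (t, KK A k g t)) →
      ∀ g' ∈ KK A k g (t + 1), ∀ j, (t - 1) * m ≤ j → j ≤ (t + 1) * m →
      ∀ z ∈ RR A (hst A g' j), G.dist z (g' t) = G.dist z (g t) ∧ g' t ≠ z := by
    intro t hcov g' hg'
    have hE : ∀ z ∈ EE A t (KK A k g t), G.dist z (g' t) = G.dist z (g t) ∧ g' t ≠ z := by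
      intro z hz
      obtain ⟨i, rfl⟩ := hcov hz
      rw [KK_succ] at hg'
      refine ⟨hg'.2 i, fun h => ?_⟩
      have h1 := hg'.2 i
      rw [h, SimpleGraph.dist_self] at h1
      exact NC t i (hG.dist_eq_zero_iff.1 h1.symm)
    have hgood : ∀ j, j ≤ (t + 1) * m → Good A t g' j := by
      intro j
      induction j with
      | zero => intro _ i _ hi; omega
      | succ j ih =>
        intro hj i hi hi'
        have ih := ih (by omega)
        rcases Nat.lt_or_ge i j with h | h
        · exact ih i hi h
        · have : i = j := by omega
          subst this
          intro hmem
          exact (hE _ ⟨g', hKanti t 1 hg', i, hi, by omega, ih, hmem⟩).2 rfl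
    intro j hj1 hj2 z hz
    exact hE z ⟨g', hKanti t 1 hg', j, hj1, hj2, hgood j hj2, hz⟩
  have cov : ∀ T, T ≤ N / m → EE A T (KK A k g T) ⊆ Set.range (prb A k (T, KK A k g T)) := by
    intro T
    induction T using Nat.strong_induction_on with
    | _ T ih =>
      intro hT
      have hc := count hG hm δ hδ hdist A T (KK A k g T) (by
        intro t ht g' hg' g'' hg'' j hj1 hj2 z hz
        have hsub : KK A k g T ⊆ KK A k g (t + 1) := by
          obtain ⟨d, rfl⟩ := Nat.exists_eq_add_of_le (show t + 1 ≤ T by omega)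
          exact hKanti _ _
        have hcv := ih t ht (by omega)
        have h1 := cons t hcv g' (hsub hg') j hj1 hj2 z hz
        refine ⟨?_, h1.2⟩
        have hzE : ∃ i, prb A k (t, KK A k g t) i = z := by
          apply hcv
          refine ⟨g', hKanti t 1 (hsub hg'), j, hj1, hj2, ?_, hz⟩
          intro i hi hi' hmem
          exact (cons t hcv g' (hsub hg') i hi (by omega) _ hmem).2 rfl
        obtain ⟨i, rfl⟩ := hzE
        have h2 := hsub hg''
        rw [KK_succ] at h2
        rw [h1.1, h2.2 i])
      obtain ⟨F, hF, hFc⟩ := hc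
      have hFk : F.card ≤ k := by
        rw [hk]
        refine hFc.trans ?_
        exact Nat.mul_le_mul_right _ (Nat.mul_le_mul_left _ (Nat.pow_le_pow_right (by omega) hT))
      have hex : ∃ f : Fin k → V, EE A T (KK A k g T) ⊆ Set.range f := by
        refine ⟨fun i => if h : (i : ℕ) < F.card then (F.equivFin.symm ⟨i, h⟩ : V)
          else Classical.arbitrary V, ?_⟩
        intro z hz
        have hzF := hF hz
        refine ⟨⟨F.equivFin ⟨z, hzF⟩, lt_of_lt_of_le (F.equivFin ⟨z, hzF⟩).2 hFk⟩, ?_⟩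
        simp
      unfold prb
      rw [dif_pos hex]
      exact hex.choose_spec
  obtain ⟨s, hs, hR⟩ := hA (liftT G m g) (lift_valid hm hg)
  have hT : s / m ≤ N / m := Nat.div_le_div_right (by omega)
  have hd := Nat.div_add_mod s m
  have hlt : s % m < m := Nat.mod_lt _ (by omega)
  rw [Nat.mul_comm] at hd
  have hfin := cons (s / m) (cov _ hT) g (hKg _) (s + 1)
    (le_trans (Nat.mul_le_mul_right m (Nat.sub_le _ 1)) (by omega))
    (by rw [Nat.add_mul]; omega)
  have hcand : cand A (hst A g (s + 1)) = liftT G m g s := by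
    have hlen : (hst A g (s + 1)).length = s + 1 := hist_length _ _
    have hex : ∃ ρ, ValidTraj (Subdiv G m) ρ ∧
        probeHist (Subdiv G m) A ρ (hst A g (s + 1)).length = hst A g (s + 1) :=
      ⟨liftT G m g, lift_valid hm hg, by rw [hlen]; rfl⟩
    unfold cand
    rw [dif_pos hex]
    have h1 := hex.choose_spec
    have e : (hst A g (s + 1)).length - 1 = s := by omega
    refine (congrArg hex.choose e).trans ?_
    have h2 : probeHist (Subdiv G m) A hex.choose (s + 1) = hst A g (s + 1) :=
      (congrArg (probeHist (Subdiv G m) A hex.choose) hlen).symm.trans h1.2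
    have : hex.choose s ∈ RSet (Subdiv G m) A (liftT G m g) s := ⟨_, h1.1, h2, rfl⟩
    rw [hR] at this
    exact this
  rcases seg_end (G := G) (g (s / m)) (g (s / m + 1)) (s % m) hlt with h | h
  · apply (hfin (g (s / m)) _).2 rfl
    rw [RR, hcand]
    simp only [Finset.mem_insert, Finset.mem_singleton]
    exact Or.inr (Or.inr (Or.inl h))
  · apply (hfin (g (s / m)) _).2 rfl
    rw [RR, hcand]
    simp only [Finset.mem_insert, Finset.mem_singleton]
    exact Or.inr (Or.inr (Or.inr h))

end Sim

/-- There is an absolute constant `C > 0` such that for every finite connected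
graph `G` with at least two vertices, writing `η = η(G)`, `δ = diam(G)` and
`capt` for the capture time of the one-cop game on `G^{1/η}`, one has
`ζ(G) ≤ C · 2^(capt/η) · 16^η · δ^(2η)`. -/
theorem locNum_le_const_mul :
    ∃ C : ℝ, 0 < C ∧ ∀ (n : ℕ) (G : SimpleGraph (Fin n)),
      G.Connected → 2 ≤ n →
      (locNum G : ℝ) ≤ C *
        (2 : ℝ) ^ ((captTime (Subdiv G (subdivNum G)) 1 : ℝ) / (subdivNum G : ℝ)) *
        (16 : ℝ) ^ (subdivNum G) * (G.diam : ℝ) ^ (2 * subdivNum G) := by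
  refine ⟨16, by norm_num, fun n G hG hn => ?_⟩
  obtain ⟨hm, A0, hA0⟩ : 1 ≤ subdivNum G ∧ Localizable (Subdiv G (subdivNum G)) 1 :=
    Nat.sInf_mem (s := {m | 1 ≤ m ∧ Localizable (Subdiv G m) 1})
      ⟨100 * n, by omega, exists_localizable n hn G hG⟩
  generalize subdivNum G = m at *
  haveI : Finite (SubVert (Fin n) G m) := by
    unfold SubVert
    infer_instance
  obtain ⟨T, hT⟩ := exists_bound hA0
  obtain ⟨A, hA⟩ : ∃ A : CopStrategy (SubVert (Fin n) G m) 1,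
      ∀ r, ValidTraj (Subdiv G m) r → ∃ t < captTime (Subdiv G m) 1,
        RSet (Subdiv G m) A r t = {r t} :=
    Nat.sInf_mem (s := {T | ∃ A : CopStrategy (SubVert (Fin n) G m) 1,
      ∀ r, ValidTraj (Subdiv G m) r → ∃ t < T, RSet (Subdiv G m) A r t = {r t}}) ⟨T, A0, hT⟩
  generalize captTime (Subdiv G m) 1 = N at *
  haveI : Nontrivial (Fin n) := Fin.nontrivial_iff_two_le.2 hn
  have hδ : 1 ≤ G.diam := Nat.one_le_iff_ne_zero.2 (connected_iff_diam_ne_zero.1 hG)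
  have hdist : ∀ u v, G.dist u v ≤ G.diam := fun u v =>
    dist_le_diam (connected_iff_ediam_ne_top.1 hG)
  have hloc := sim hG hm G.diam hδ hdist A N hA
  have hle : locNum G ≤ 16 * 2 ^ (N / m) * (16 * G.diam ^ 2) ^ m := Nat.sInf_le hloc
  have hle' : (locNum G : ℝ) ≤ 16 * 2 ^ (N / m) * (16 * (G.diam : ℝ) ^ 2) ^ m := by
    exact_mod_cast hle
  refine hle'.trans ?_
  rw [mul_pow, ← pow_mul, ← mul_assoc]
  have hp : (2 : ℝ) ^ (N / m) ≤ (2 : ℝ) ^ ((N : ℝ) / (m : ℝ)) := by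
    rw [← Real.rpow_natCast]
    exact Real.rpow_le_rpow_of_exponent_le (by norm_num) Nat.cast_div_le
  gcongr
end

section
/- Let G be a finite simple connected graph, m ≥ 2 an integer, q ∈ V(G), and {w1, w2} an edge of G. Let p = q^{1/m}, and let v be the vertex of G^{1/m} on the thread replacing {w1, w2} at distance x from w1^{1/m}, where 0 < x < m/2. If dist_{G^{1/m}}(p, v) mod m < m/2, then ⌊dist_{G^{1/m}}(p, v) / m⌋ = dist_G(q, w1). -/
open SimpleGraph

/-- Explicit formula for the distance from a branch vertex `q`. -/
noncomputable def subPot {n : ℕ} (G : SimpleGraph (Fin n)) (m : ℕ) (q : Fin n) : SubVert (Fin n) G m → ℕ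
  | Sum.inl u => m * G.dist q u
  | Sum.inr ei => min (m * G.dist q ei.1.1.1 + (ei.2 + 1))
      (m * G.dist q ei.1.1.2 + (m - (ei.2 + 1)))

lemma mul_dist_le {n : ℕ} (G : SimpleGraph (Fin n)) (hG : G.Connected) (m : ℕ) (q u v : Fin n)
    (h : G.Adj u v) : m * G.dist q u ≤ m * G.dist q v + m := by
  have h1 : G.dist q u ≤ G.dist q v + 1 := by
    have := hG.dist_triangle (u := q) (v := v) (w := u)
    rwa [SimpleGraph.dist_eq_one_iff_adj.mpr h.symm] at this
  calc _ ≤ m * (G.dist q v + 1) := Nat.mul_le_mul_left _ h1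
    _ = _ := by ring

lemma subPot_pre {n m : ℕ} (G : SimpleGraph (Fin n)) (hG : G.Connected) (hm : 2 ≤ m) (q : Fin n)
    (a b : SubVert (Fin n) G m) (h : subPre G m a b) :
    subPot G m q b ≤ subPot G m q a + 1 ∧ subPot G m q a ≤ subPot G m q b + 1 := by
  rcases a with u | ⟨⟨⟨a1, a2⟩, ha, hlt⟩, i, hi⟩ <;>
    rcases b with v | ⟨⟨⟨b1, b2⟩, hb, hlt'⟩, j, hj⟩
  · simp only [subPre] at h
    omega
  · have h1 := mul_dist_le G hG m q b1 b2 hb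
    have h2 := mul_dist_le G hG m q b2 b1 hb.symm
    simp only [subPre] at h
    simp only [subPot]
    rcases h with ⟨rfl, h⟩ | ⟨rfl, h⟩ <;> omega
  · simp [subPre] at h
  · simp only [subPre, Subtype.mk.injEq, Prod.mk.injEq] at h
    obtain ⟨⟨rfl, rfl⟩, h⟩ := h
    simp only [subPot]
    omega

lemma subPot_adj {n m : ℕ} (G : SimpleGraph (Fin n)) (hG : G.Connected) (hm : 2 ≤ m) (q : Fin n)
    (a b : SubVert (Fin n) G m) (h : (Subdiv G m).Adj a b) :
    subPot G m q b ≤ subPot G m q a + 1 := by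
  rw [Subdiv, SimpleGraph.fromRel_adj] at h
  rcases h.2 with h | h
  · exact (subPot_pre G hG hm q _ _ h).1
  · exact (subPot_pre G hG hm q _ _ h).2

lemma subPot_walk {n m : ℕ} (G : SimpleGraph (Fin n)) (hG : G.Connected) (hm : 2 ≤ m) (q : Fin n)
    {a b : SubVert (Fin n) G m} (p : (Subdiv G m).Walk a b) :
    subPot G m q b ≤ subPot G m q a + p.length := by
  induction p with
  | nil => simp
  | cons h p ih =>
    have := subPot_adj G hG hm q _ _ h
    rw [SimpleGraph.Walk.length_cons]
    omega

lemma subPot_desc {n m : ℕ} (G : SimpleGraph (Fin n)) (hG : G.Connected) (hm : 2 ≤ m) (q : Fin n)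
    (v : SubVert (Fin n) G m) (hv : v ≠ Sum.inl q) :
    ∃ w, (Subdiv G m).Adj w v ∧ subPot G m q w + 1 ≤ subPot G m q v := by
  simp only [Subdiv, SimpleGraph.fromRel_adj]
  rcases v with u | ⟨⟨⟨a1, a2⟩, ha, hlt⟩, i, hi⟩
  · have hu : u ≠ q := fun h => hv (by rw [h])
    obtain ⟨p, hp⟩ := hG.exists_walk_length_eq_dist u q
    cases p with
    | nil => exact absurd rfl hu
    | @cons _ u' _ h p =>
      have hd : m * G.dist q u' + m ≤ m * G.dist q u := by
        have := SimpleGraph.dist_le p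
        rw [SimpleGraph.Walk.length_cons] at hp
        rw [SimpleGraph.dist_comm (u := q), SimpleGraph.dist_comm (u := q) (v := u)]
        calc _ = m * (G.dist u' q + 1) := by ring
          _ ≤ _ := Nat.mul_le_mul_left _ (by omega)
      rcases lt_or_gt_of_ne h.ne with hl | hl
      · refine ⟨Sum.inr (⟨(u, u'), h, hl⟩, ⟨0, by omega⟩), ⟨by simp, Or.inr ?_⟩, ?_⟩
        · simp [subPre]
        · simp only [subPot]
          omega
      · refine ⟨Sum.inr (⟨(u', u), h.symm, hl⟩, ⟨m - 2, by omega⟩), ⟨by simp, Or.inr ?_⟩, ?_⟩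
        · simp only [subPre]
          right
          exact ⟨by trivial, by omega⟩
        · simp only [subPot]
          omega
  · by_cases hc : m * G.dist q a1 + (i + 1) ≤ m * G.dist q a2 + (m - (i + 1))
    · by_cases h0 : i = 0
      · refine ⟨Sum.inl a1, ⟨by simp, Or.inl ?_⟩, ?_⟩
        · simp [subPre, h0]
        · simp only [subPot]
          omega
      · refine ⟨Sum.inr (⟨(a1, a2), ha, hlt⟩, ⟨i - 1, by omega⟩), ⟨?_, Or.inl ?_⟩, ?_⟩
        · simp only [ne_eq, Sum.inr.injEq, Prod.mk.injEq, Fin.mk.injEq, true_and]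
          omega
        · simp only [subPre, true_and]
          omega
        · simp only [subPot]
          omega
    · by_cases h0 : i + 2 = m
      · refine ⟨Sum.inl a2, ⟨by simp, Or.inl ?_⟩, ?_⟩
        · simp [subPre, h0]
        · simp only [subPot]
          omega
      · refine ⟨Sum.inr (⟨(a1, a2), ha, hlt⟩, ⟨i + 1, by omega⟩), ⟨?_, Or.inr ?_⟩, ?_⟩
        · simp only [ne_eq, Sum.inr.injEq, Prod.mk.injEq, Fin.mk.injEq, true_and]
          omega
        · simp only [subPre, true_and]
        · simp only [subPot]
          omega

lemma subPot_exists_walk {n m : ℕ} (G : SimpleGraph (Fin n)) (hG : G.Connected) (hm : 2 ≤ m)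
    (q : Fin n) (k : ℕ) : ∀ v : SubVert (Fin n) G m, subPot G m q v ≤ k →
    ∃ p : (Subdiv G m).Walk (Sum.inl q) v, p.length ≤ k := by
  induction k with
  | zero =>
    intro v hk
    by_cases hv : v = Sum.inl q
    · subst hv
      exact ⟨SimpleGraph.Walk.nil, by simp⟩
    · obtain ⟨w, _, h⟩ := subPot_desc G hG hm q v hv
      omega
  | succ k ih =>
    intro v hk
    by_cases hv : v = Sum.inl q
    · subst hv
      exact ⟨SimpleGraph.Walk.nil, by simp⟩
    · obtain ⟨w, ha, h⟩ := subPot_desc G hG hm q v hv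
      obtain ⟨p, hp⟩ := ih w (by omega)
      exact ⟨p.concat ha, by rw [SimpleGraph.Walk.length_concat]; omega⟩

lemma subdiv_dist_eq {n m : ℕ} (G : SimpleGraph (Fin n)) (hG : G.Connected) (hm : 2 ≤ m)
    (q : Fin n) (v : SubVert (Fin n) G m) :
    (Subdiv G m).dist (Sum.inl q) v = subPot G m q v := by
  obtain ⟨p, hp⟩ := subPot_exists_walk G hG hm q _ v le_rfl
  apply le_antisymm ((SimpleGraph.dist_le p).trans hp)
  obtain ⟨p', hp'⟩ := p.reachable.exists_walk_length_eq_dist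
  have := subPot_walk G hG hm q p'
  rw [← hp']
  simpa [subPot] using this


/-- For `p = q^{1/m}` and `v` at distance `x` from `w₁` along the thread of the
edge `{w₁, w₂}` with `0 < x < m/2`: if `dist(p,v) mod m < m/2`, then
`⌊dist(p,v) / m⌋ = dist_G(q, w₁)`. -/
theorem subdiv_dist_div_of_mod_lt {n m : ℕ} (G : SimpleGraph (Fin n))
    (hG : G.Connected) (hm : 2 ≤ m) (q w₁ w₂ : Fin n) (hw : G.Adj w₁ w₂)
    (x : ℕ) (hx0 : 0 < x) (hxm : 2 * x < m)
    (hmod : 2 * ((Subdiv G m).dist (Sum.inl q) (threadVert G m w₁ w₂ hw x) % m) < m) :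
    (Subdiv G m).dist (Sum.inl q) (threadVert G m w₁ w₂ hw x) / m = G.dist q w₁ := by
  rw [subdiv_dist_eq G hG hm] at *
  have key : subPot G m q (threadVert G m w₁ w₂ hw x) =
      min (m * G.dist q w₁ + x) (m * G.dist q w₂ + (m - x)) := by
    unfold threadVert
    rw [dif_neg (by omega), dif_neg (by omega)]
    split_ifs
    · simp only [subPot]
      rw [Nat.sub_add_cancel (by omega)]
    · simp only [subPot]
      rw [Nat.sub_add_cancel (by omega), min_comm]
      congr 2
      omega
  rw [key] at hmod ⊢
  rcases min_choice (m * G.dist q w₁ + x) (m * G.dist q w₂ + (m - x)) with h | h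
  · rw [h, Nat.mul_add_div (by omega), Nat.div_eq_of_lt (by omega), add_zero]
  · rw [h, Nat.mul_add_mod, Nat.mod_eq_of_lt (by omega)] at hmod
    omega
end

section
/- Let G be a finite simple connected graph, m ≥ 2 an integer, q ∈ V(G), and {w1, w2} an edge of G. Let p = q^{1/m}, and let v be the vertex of G^{1/m} on the thread replacing {w1, w2} at distance x from w1^{1/m}, where 0 < x < m/2. If dist_{G^{1/m}}(p, v) mod m > m/2, then dist_G(q, w1) = dist_G(q, w2) + 1 and ⌊dist_{G^{1/m}}(p, v) / m⌋ + 1 = dist_G(q, w1). -/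
open SimpleGraph

theorem aux_dist_adj {V : Type*} (G : SimpleGraph V) (hG : G.Connected) (q : V) {u v : V}
    (h : G.Adj u v) : G.dist q u ≤ G.dist q v + 1 := by
  have h1 := hG.dist_triangle (u := q) (v := v) (w := u)
  have h2 : G.dist v u = 1 := SimpleGraph.dist_eq_one_iff_adj.mpr h.symm
  omega

/-- Distance potential on the subdivision. -/
noncomputable def auxPot {V : Type*} [LinearOrder V] (G : SimpleGraph V) (m : ℕ) (q : V) :
    SubVert V G m → ℕ
  | Sum.inl u => m * G.dist q u
  | Sum.inr ei => min (m * G.dist q ei.1.1.1 + (ei.2 + 1))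
      (m * G.dist q ei.1.1.2 + (m - (ei.2 + 1)))

theorem auxPot_pre {V : Type*} [LinearOrder V] (G : SimpleGraph V) (hG : G.Connected) (m : ℕ)
    (hm : 2 ≤ m) (q : V) (a b : SubVert V G m) (h : subPre G m a b) :
    auxPot G m q a ≤ auxPot G m q b + 1 ∧ auxPot G m q b ≤ auxPot G m q a + 1 := by
  rcases a with u | ⟨⟨⟨e1, e2⟩, he, hlt⟩, ⟨i, hi⟩⟩ <;>
    rcases b with v | ⟨⟨⟨f1, f2⟩, hf, hlt'⟩, ⟨j, hj⟩⟩
  · have := h.1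
    omega
  · have h1 := Nat.mul_le_mul_left m (aux_dist_adj G hG q hf)
    have h2 := Nat.mul_le_mul_left m (aux_dist_adj G hG q hf.symm)
    simp only [subPre] at h
    simp only [auxPot]
    simp only [mul_add, mul_one] at h1 h2
    rcases h with ⟨rfl, h⟩ | ⟨rfl, h⟩ <;> omega
  · exact h.elim
  · simp only [subPre, Subtype.mk.injEq, Prod.mk.injEq] at h
    obtain ⟨⟨rfl, rfl⟩, h⟩ := h
    simp only [auxPot]
    omega

theorem auxPot_walk {V : Type*} [LinearOrder V] (G : SimpleGraph V) (hG : G.Connected) (m : ℕ)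
    (hm : 2 ≤ m) (q : V) {a b : SubVert V G m} (p : (Subdiv G m).Walk a b) :
    auxPot G m q b ≤ auxPot G m q a + p.length := by
  induction p with
  | nil => simp
  | cons h p ih =>
    rw [Subdiv, SimpleGraph.fromRel_adj] at h
    rw [SimpleGraph.Walk.length_cons]
    rcases h.2 with h | h
    · have := auxPot_pre G hG m hm q _ _ h
      omega
    · have := auxPot_pre G hG m hm q _ _ h
      omega

theorem aux_thread_adj {V : Type*} [LinearOrder V] (G : SimpleGraph V) (m : ℕ)
    (hm : 2 ≤ m) {u v : V} (h : G.Adj u v) (x : ℕ) (hx : x < m) :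
    (Subdiv G m).Adj (threadVert G m u v h x) (threadVert G m u v h (x + 1)) := by
  rw [Subdiv, SimpleGraph.fromRel_adj]
  rcases lt_or_gt_of_ne h.ne with hlt | hlt
  · unfold threadVert
    simp only [hlt]
    split_ifs <;> simp only [subPre, ne_eq, Sum.inr.injEq, Prod.mk.injEq, Fin.mk.injEq, reduceCtorEq,
      true_and, not_false_eq_true, or_false, false_or] <;>
      first | contradiction | omega | (simp; done) | (simp; omega)
  · unfold threadVert
    simp only [not_lt_of_gt hlt]
    split_ifs <;> simp only [subPre, ne_eq, Sum.inr.injEq, Prod.mk.injEq, Fin.mk.injEq, reduceCtorEq,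
      true_and, not_false_eq_true, or_false, false_or] <;>
      first | contradiction | omega | (simp; done) | (simp; omega)

theorem aux_thread_walk {V : Type*} [LinearOrder V] (G : SimpleGraph V) (m : ℕ)
    (hm : 2 ≤ m) {u v : V} (h : G.Adj u v) (x : ℕ) (hx : x ≤ m) :
    ∃ p : (Subdiv G m).Walk (Sum.inl u) (threadVert G m u v h x), p.length = x := by
  induction x with
  | zero =>
    have : threadVert G m u v h 0 = Sum.inl u := by simp [threadVert]
    rw [this]
    exact ⟨SimpleGraph.Walk.nil, rfl⟩
  | succ x ih =>
    obtain ⟨p, hp⟩ := ih (by omega)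
    exact ⟨p.concat (aux_thread_adj G m hm h x (by omega)), by simp [hp]⟩

theorem aux_branch_walk {V : Type*} [LinearOrder V] (G : SimpleGraph V) (m : ℕ)
    (hm : 2 ≤ m) {u v : V} (p : G.Walk u v) :
    ∃ p' : (Subdiv G m).Walk (Sum.inl u) (Sum.inl v), p'.length = m * p.length := by
  induction p with
  | nil => exact ⟨SimpleGraph.Walk.nil, by simp⟩
  | @cons a b c h p ih =>
    obtain ⟨r, hr⟩ := ih
    obtain ⟨s, hs⟩ := aux_thread_walk G m hm h m le_rfl
    have : threadVert G m a b h m = Sum.inl b := by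
      have : m ≠ 0 := by omega
      simp [threadVert, this]
    refine ⟨(s.copy rfl this).append r, ?_⟩
    simp [hs, hr]
    ring

theorem aux_thread_symm {V : Type*} [LinearOrder V] (G : SimpleGraph V) (m : ℕ)
    {u v : V} (h : G.Adj u v) (x : ℕ) (hx0 : 0 < x) (hx : x < m) :
    threadVert G m u v h x = threadVert G m v u h.symm (m - x) := by
  unfold threadVert
  rcases lt_or_gt_of_ne h.ne with hlt | hlt
  · have := not_lt_of_gt hlt
    split_ifs <;> first | omega | (simp; try omega)
  · have := not_lt_of_gt hlt
    split_ifs <;> first | omega | (simp; try omega)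

theorem aux_pot_thread {V : Type*} [LinearOrder V] (G : SimpleGraph V) (m : ℕ) (q : V)
    {u v : V} (h : G.Adj u v) (x : ℕ) (hx0 : 0 < x) (hx : x < m) :
    auxPot G m q (threadVert G m u v h x) =
      min (m * G.dist q u + x) (m * G.dist q v + (m - x)) := by
  unfold threadVert
  split_ifs <;> simp only [auxPot] <;> omega

theorem aux_upper {V : Type*} [LinearOrder V] (G : SimpleGraph V) (hG : G.Connected) (m : ℕ)
    (hm : 2 ≤ m) (q : V) {u v : V} (h : G.Adj u v) (x : ℕ) (hx : x ≤ m) :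
    ∃ p : (Subdiv G m).Walk (Sum.inl q) (threadVert G m u v h x),
      p.length = m * G.dist q u + x := by
  obtain ⟨r, hr⟩ := hG.exists_walk_length_eq_dist q u
  obtain ⟨s, hs⟩ := aux_branch_walk G m hm r
  obtain ⟨t, ht⟩ := aux_thread_walk G m hm h x hx
  exact ⟨s.append t, by simp [hs, ht, hr]⟩

/-- For `p = q^{1/m}` and `v` at distance `x` from `w₁` along the thread of the
edge `{w₁, w₂}` with `0 < x < m/2`: if `dist(p,v) mod m > m/2`, then
`dist_G(q,w₁) = dist_G(q,w₂) + 1` and `⌊dist(p,v) / m⌋ + 1 = dist_G(q, w₁)`. -/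
theorem subdiv_dist_div_of_mod_gt {n m : ℕ} (G : SimpleGraph (Fin n))
    (hG : G.Connected) (hm : 2 ≤ m) (q w₁ w₂ : Fin n) (hw : G.Adj w₁ w₂)
    (x : ℕ) (hx0 : 0 < x) (hxm : 2 * x < m)
    (hmod : m < 2 * ((Subdiv G m).dist (Sum.inl q) (threadVert G m w₁ w₂ hw x) % m)) :
    G.dist q w₁ = G.dist q w₂ + 1 ∧
    (Subdiv G m).dist (Sum.inl q) (threadVert G m w₁ w₂ hw x) / m + 1 = G.dist q w₁ := by
  have hxm' : x < m := by omega
  obtain ⟨p1, hp1⟩ := aux_upper G hG m hm q hw x hxm'.le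
  obtain ⟨p2, hp2⟩ := aux_upper G hG m hm q hw.symm (m - x) (by omega)
  have h1 := SimpleGraph.dist_le p1
  have h2 := SimpleGraph.dist_le p2
  rw [hp2, ← aux_thread_symm G m hw x hx0 hxm'] at h2
  obtain ⟨p3, hp3⟩ := p1.reachable.exists_walk_length_eq_dist
  have h3 := auxPot_walk G hG m hm q p3
  rw [aux_pot_thread G m q hw x hx0 hxm', hp3] at h3
  simp only [auxPot, SimpleGraph.dist_self, mul_zero, zero_add] at h3
  rw [hp1] at h1
  have h4 := aux_dist_adj G hG q hw
  generalize (Subdiv G m).dist (Sum.inl q) (threadVert G m w₁ w₂ hw x) = D at *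
  rcases (by omega : D = m * G.dist q w₁ + x ∨ D = m * G.dist q w₂ + (m - x)) with h5 | h5
  · rw [h5, Nat.mul_add_mod, Nat.mod_eq_of_lt hxm'] at hmod
    omega
  · have h6 : D / m = G.dist q w₂ := by
      rw [h5, Nat.mul_add_div (by omega), Nat.div_eq_of_lt (by omega), add_zero]
    have h7 : G.dist q w₂ < G.dist q w₁ := by
      by_contra hc
      have := Nat.mul_le_mul_left m (not_lt.mp hc)
      omega
    omega
end

section
/- Let G be a finite simple connected graph, m ≥ 2 an integer, and b a branch vertex of G^{1/m}. Then for every vertex v of G^{1/m}, m divides dist_{G^{1/m}}(b, v) if and only if v is a branch vertex. -/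
open SimpleGraph

/-- Explicit formula for the distance from the branch vertex `b`. -/
noncomputable def subF {n m : ℕ} (G : SimpleGraph (Fin n)) (b : Fin n) :
    SubVert (Fin n) G m → ℕ
  | Sum.inl w => m * G.dist b w
  | Sum.inr ei => min (m * G.dist b ei.1.1.1 + (ei.2 + 1))
      (m * G.dist b ei.1.1.2 + (m - 1 - ei.2))

lemma subF_dist_step {n : ℕ} (m : ℕ) (G : SimpleGraph (Fin n)) (hG : G.Connected) (b : Fin n)
    {u w : Fin n} (h : G.Adj u w) : m * G.dist b w ≤ m * G.dist b u + m := by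
  have h1 : G.dist b w ≤ G.dist b u + G.dist u w := hG.dist_triangle
  have h2 : G.dist u w = 1 := SimpleGraph.dist_eq_one_iff_adj.mpr h
  rw [h2] at h1
  calc m * G.dist b w ≤ m * (G.dist b u + 1) := Nat.mul_le_mul_left _ h1
    _ = _ := by ring

lemma subF_pre {n m : ℕ} (G : SimpleGraph (Fin n)) (hG : G.Connected) (hm : 2 ≤ m) (b : Fin n)
    (x y : SubVert (Fin n) G m) (h : subPre G m x y) :
    subF G b x ≤ subF G b y + 1 ∧ subF G b y ≤ subF G b x + 1 := by
  rcases x with u | ⟨⟨⟨e1, e2⟩, he, hlt⟩, i⟩ <;> rcases y with w | ⟨⟨⟨f1, f2⟩, hf, hlt'⟩, j⟩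
  · simp only [subPre] at h
    omega
  · have h1 := subF_dist_step m G hG b hf
    have h2 := subF_dist_step m G hG b hf.symm
    have hj := j.2
    simp only [subPre] at h
    simp only [subF]
    rcases h with ⟨rfl, h⟩ | ⟨rfl, h⟩ <;> dsimp only at * <;> omega
  · simp [subPre] at h
  · have hj := j.2
    simp only [subPre, Subtype.mk.injEq, Prod.mk.injEq] at h
    obtain ⟨⟨rfl, rfl⟩, h⟩ := h
    simp only [subF]
    omega

lemma subF_le_walk {n m : ℕ} (G : SimpleGraph (Fin n)) (hG : G.Connected) (hm : 2 ≤ m) (b : Fin n)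
    {x y : SubVert (Fin n) G m} (p : (Subdiv G m).Walk x y) :
    subF G b y ≤ subF G b x + p.length := by
  induction p with
  | nil => simp
  | cons h p ih =>
    have h' := (SimpleGraph.fromRel_adj _ _ _).mp h
    rw [SimpleGraph.Walk.length_cons]
    rcases h'.2 with h' | h'
    · have := subF_pre G hG hm b _ _ h'
      omega
    · have := subF_pre G hG hm b _ _ h'
      omega

lemma sub_walk_left {n m : ℕ} (G : SimpleGraph (Fin n))
    (e : {e : Fin n × Fin n // G.Adj e.1 e.2 ∧ e.1 < e.2}) (i : ℕ) (hi : i < m - 1) :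
    ∃ p : (Subdiv G m).Walk (Sum.inl e.1.1) (Sum.inr (e, ⟨i, hi⟩)), p.length = i + 1 := by
  induction i with
  | zero =>
    have hadj : (Subdiv G m).Adj (Sum.inl e.1.1) (Sum.inr (e, ⟨0, hi⟩)) := by
      refine (SimpleGraph.fromRel_adj _ _ _).mpr ⟨by simp, Or.inl ?_⟩
      simp [subPre]
    exact ⟨SimpleGraph.Walk.cons hadj SimpleGraph.Walk.nil, by simp⟩
  | succ i ih =>
    obtain ⟨p, hp⟩ := ih (by omega)
    have hadj : (Subdiv G m).Adj (Sum.inr (e, ⟨i, by omega⟩)) (Sum.inr (e, ⟨i + 1, hi⟩)) := by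
      refine (SimpleGraph.fromRel_adj _ _ _).mpr ⟨by simp, Or.inl ?_⟩
      simp [subPre]
    exact ⟨p.concat hadj, by rw [SimpleGraph.Walk.length_concat, hp]⟩

lemma sub_walk_right {n m : ℕ} (G : SimpleGraph (Fin n))
    (e : {e : Fin n × Fin n // G.Adj e.1 e.2 ∧ e.1 < e.2}) (k : ℕ) :
    ∀ (i : ℕ) (hi : i < m - 1), i + k + 2 = m →
    ∃ p : (Subdiv G m).Walk (Sum.inl e.1.2) (Sum.inr (e, ⟨i, hi⟩)), p.length = k + 1 := by
  induction k with
  | zero =>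
    intro i hi hk
    have hadj : (Subdiv G m).Adj (Sum.inl e.1.2) (Sum.inr (e, ⟨i, hi⟩)) := by
      refine (SimpleGraph.fromRel_adj _ _ _).mpr ⟨by simp, Or.inl ?_⟩
      exact Or.inr ⟨rfl, hk⟩
    exact ⟨SimpleGraph.Walk.cons hadj SimpleGraph.Walk.nil, by simp⟩
  | succ k ih =>
    intro i hi hk
    obtain ⟨p, hp⟩ := ih (i + 1) (by omega) (by omega)
    have hadj : (Subdiv G m).Adj (Sum.inr (e, ⟨i + 1, by omega⟩)) (Sum.inr (e, ⟨i, hi⟩)) := by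
      refine (SimpleGraph.fromRel_adj _ _ _).mpr ⟨by simp, Or.inr ?_⟩
      simp [subPre]
    exact ⟨p.concat hadj, by rw [SimpleGraph.Walk.length_concat, hp]⟩

lemma sub_walk_edge {n m : ℕ} (G : SimpleGraph (Fin n)) (hm : 2 ≤ m) {u w : Fin n}
    (h : G.Adj u w) :
    ∃ p : (Subdiv G m).Walk (Sum.inl u) (Sum.inl w), p.length = m := by
  have key : ∀ e : {e : Fin n × Fin n // G.Adj e.1 e.2 ∧ e.1 < e.2},
      ∃ p : (Subdiv G m).Walk (Sum.inl e.1.1) (Sum.inl e.1.2), p.length = m := by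
    intro e
    obtain ⟨p, hp⟩ := sub_walk_left (m := m) G e 0 (by omega)
    obtain ⟨q, hq⟩ := sub_walk_right (m := m) G e (m - 2) 0 (by omega) (by omega)
    refine ⟨p.append q.reverse, ?_⟩
    rw [SimpleGraph.Walk.length_append, SimpleGraph.Walk.length_reverse, hp, hq]
    omega
  rcases lt_or_gt_of_ne h.ne with hlt | hlt
  · exact key ⟨(u, w), h, hlt⟩
  · obtain ⟨p, hp⟩ := key ⟨(w, u), h.symm, hlt⟩
    exact ⟨p.reverse, by simpa using hp⟩

lemma sub_walk_lift {n m : ℕ} (G : SimpleGraph (Fin n)) (hm : 2 ≤ m) {u w : Fin n}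
    (q : G.Walk u w) :
    ∃ p : (Subdiv G m).Walk (Sum.inl u) (Sum.inl w), p.length = m * q.length := by
  induction q with
  | nil => exact ⟨SimpleGraph.Walk.nil, by simp⟩
  | cons h q ih =>
    obtain ⟨p, hp⟩ := ih
    obtain ⟨r, hr⟩ := sub_walk_edge G hm h
    refine ⟨r.append p, ?_⟩
    rw [SimpleGraph.Walk.length_append, SimpleGraph.Walk.length_cons, hp, hr]
    ring

lemma sub_walk_subF {n m : ℕ} (G : SimpleGraph (Fin n)) (hG : G.Connected) (hm : 2 ≤ m)
    (b : Fin n) (v : SubVert (Fin n) G m) :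
    ∃ p : (Subdiv G m).Walk (Sum.inl b) v, p.length = subF G b v := by
  have base : ∀ w : Fin n, ∃ p : (Subdiv G m).Walk (Sum.inl b) (Sum.inl w),
      p.length = m * G.dist b w := by
    intro w
    obtain ⟨q, hq⟩ := hG.exists_walk_length_eq_dist b w
    rw [← hq]
    exact sub_walk_lift G hm q
  rcases v with w | ⟨e, i, hi⟩
  · exact base w
  · simp only [subF]
    rcases min_choice (m * G.dist b e.1.1 + (i + 1)) (m * G.dist b e.1.2 + (m - 1 - i)) with h | h
    · obtain ⟨p, hp⟩ := base e.1.1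
      obtain ⟨q, hq⟩ := sub_walk_left (m := m) G e i hi
      exact ⟨p.append q, by rw [h, SimpleGraph.Walk.length_append, hp, hq]⟩
    · obtain ⟨p, hp⟩ := base e.1.2
      obtain ⟨q, hq⟩ := sub_walk_right (m := m) G e (m - 2 - i) i hi (by omega)
      exact ⟨p.append q, by rw [h, SimpleGraph.Walk.length_append, hp, hq]; omega⟩

lemma sub_dist_eq {n m : ℕ} (G : SimpleGraph (Fin n)) (hG : G.Connected) (hm : 2 ≤ m)
    (b : Fin n) (v : SubVert (Fin n) G m) :
    (Subdiv G m).dist (Sum.inl b) v = subF G b v := by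
  obtain ⟨p, hp⟩ := sub_walk_subF G hG hm b v
  apply le_antisymm
  · rw [← hp]
    exact SimpleGraph.dist_le p
  · obtain ⟨q, hq⟩ := SimpleGraph.Reachable.exists_walk_length_eq_dist ⟨p⟩
    have := subF_le_walk G hG hm b q
    simpa [subF, hq] using this

/-- For a branch vertex `b` of `G^{1/m}` and any vertex `v` of `G^{1/m}`,
`m` divides `dist(b, v)` if and only if `v` is a branch vertex. -/
theorem subdiv_dvd_dist_iff_branch {n m : ℕ} (G : SimpleGraph (Fin n))
    (hG : G.Connected) (hm : 2 ≤ m) (b : Fin n) (v : SubVert (Fin n) G m) :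
    m ∣ (Subdiv G m).dist (Sum.inl b) v ↔ ∃ w : Fin n, v = Sum.inl w := by
  rw [sub_dist_eq G hG hm]
  rcases v with w | ⟨e, i, hi⟩
  · simp [subF]
  · simp only [subF, reduceCtorEq, exists_false, iff_false]
    rcases min_choice (m * G.dist b e.1.1 + (i + 1)) (m * G.dist b e.1.2 + (m - 1 - i)) with h | h
    · rw [h, Nat.dvd_add_right (dvd_mul_right _ _)]
      exact Nat.not_dvd_of_pos_of_lt (by omega) (by omega)
    · rw [h, Nat.dvd_add_right (dvd_mul_right _ _)]
      exact Nat.not_dvd_of_pos_of_lt (by omega) (by omega)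
end
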